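/- arXiv:2007.14088 — 9 statements merged into one kernel-verified Lean document; each statement's English description precedes it below -/
import Mathlib

section
/- Let F be a finite field of characteristic 2 with q = 2^n elements, and let G be the cyclic group C_32 of order 32. Then the unit group of the group algebra FG is isomorphic to C_32^n × C_16^n × C_8^{2n} × C_4^{4n} × C_2^{8n} × C_{2^n - 1}. -/
/-- The cyclic group of order `m`, realized as `Multiplicative (ZMod m)`. -/
abbrev C (m : ℕ) : Type := Multiplicative (ZMod m)

open MonoidAlgebra in
theorem aux_frob (F : Type*) [Field F] [CharP F 2] (k : ℕ) (y : MonoidAlgebra F (C 32)) :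
    y ^ 2 ^ k = mapRingHom (C 32) (iterateFrobenius F 2 k)
      (mapDomainRingHom F (powMonoidHom (2 ^ k) : C 32 →* C 32) y) := by
  have : CharP (MonoidAlgebra F (C 32)) 2 := charP_of_injective_algebraMap
    (algebraMap F (MonoidAlgebra F (C 32))).injective 2
  induction y using MonoidAlgebra.induction_linear with
  | zero => simp
  | add x y hx hy => rw [add_pow_char_pow, hx, hy, map_add, map_add]
  | single m r => simp [single_pow, iterateFrobenius_def]

open MonoidAlgebra in
theorem aux_card (F : Type*) [Field F] [Fintype F] [CharP F 2]
    (n : ℕ) (hF : Fintype.card F = 2 ^ n) (k : ℕ) (hk : k ≤ 5) :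
    Nat.card {y : MonoidAlgebra F (C 32) // y ^ 2 ^ k = 0} = 2 ^ (n * (32 - 2 ^ (5 - k))) := by
  let φ : C 32 →* C 32 := powMonoidHom (2 ^ k)
  let T := (mapDomainRingHom F φ.rangeRestrict).toAddMonoidHom
  have hcard : ∀ (H : Type) [Fintype H], Nat.card (MonoidAlgebra F H) = 2 ^ (n * Nat.card H) := by
    intro H _
    have e : MonoidAlgebra F H ≃ (H → F) :=
      (MonoidAlgebra.coeffEquiv).trans Finsupp.equivFunOnFinite
    rw [Nat.card_congr e, Nat.card_fun, Nat.card_eq_fintype_card (α := F), hF, ← pow_mul]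
  have hsurj : Function.Surjective T := by
    intro y
    induction y using MonoidAlgebra.induction_linear with
    | zero => exact ⟨0, map_zero _⟩
    | add x y hx hy =>
      obtain ⟨a, rfl⟩ := hx
      obtain ⟨b, rfl⟩ := hy
      exact ⟨a + b, map_add _ _ _⟩
    | single m r =>
      obtain ⟨g, rfl⟩ := φ.rangeRestrict_surjective m
      exact ⟨single g r, by simp [T]⟩
  have hker : ∀ y : MonoidAlgebra F (C 32), y ^ 2 ^ k = 0 ↔ y ∈ T.ker := by
    intro y
    rw [aux_frob, AddMonoidHom.mem_ker]
    have h1 : mapDomainRingHom F φ y =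
        mapDomainRingHom F φ.range.subtype (mapDomainRingHom F φ.rangeRestrict y) := by
      rw [← RingHom.comp_apply, ← mapDomainRingHom_comp]
      rfl
    have h2 : Function.Injective (mapRingHom (C 32) (iterateFrobenius F 2 k)) :=
      map_injective (M := C 32) (iterateFrobenius F 2 k : F →+ F) (iterateFrobenius F 2 k).injective
    have h3 : Function.Injective (mapDomainRingHom F φ.range.subtype) :=
      mapDomain_injective (R := F) (Subtype.val_injective)
    rw [map_eq_zero_iff _ h2]
    change mapDomainRingHom F φ y = 0 ↔ _
    rw [h1, map_eq_zero_iff _ h3]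
    rfl
  have hR : Nat.card φ.range = 2 ^ (5 - k) := by
    rw [IsCyclic.card_powMonoidHom_range]
    have : Nat.card (C 32) = 32 := by simp
    rw [this]
    interval_cases k <;> rfl
  have hc := AddSubgroup.card_eq_card_quotient_mul_card_addSubgroup T.ker
  rw [Nat.card_congr (QuotientAddGroup.quotientKerEquivOfSurjective T hsurj).toEquiv] at hc
  have : Fintype φ.range := Fintype.ofFinite _
  rw [hcard, hcard, hR] at hc
  rw [Nat.card_congr (Equiv.subtypeEquivRight hker)]
  have h32 : Nat.card (C 32) = 32 := by simp
  rw [h32] at hc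
  have hle : 2 ^ (5 - k) ≤ 32 := by interval_cases k <;> norm_num
  have : n * 32 = n * 2 ^ (5 - k) + n * (32 - 2 ^ (5 - k)) := by
    rw [← mul_add]; congr 1; omega
  rw [this, pow_add] at hc
  exact (Nat.eq_of_mul_eq_mul_left (by positivity) hc).symm

def auxf (n : ℕ) : (Fin n ⊕ Fin n ⊕ Fin (2 * n) ⊕ Fin (4 * n) ⊕ Fin (8 * n)) → ℕ :=
  Sum.elim (fun _ => 32) (Sum.elim (fun _ => 16) (Sum.elim (fun _ => 8)
    (Sum.elim (fun _ => 4) (fun _ => 2))))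

def auxE (n : ℕ) : ((i : _) → C (auxf n i)) ≃*
    ((Fin (n) → C 32) × (Fin (n) → C 16) × (Fin (2 * n) → C 8) × (Fin (4 * n) → C 4) ×
      (Fin (8 * n) → C 2)) where
  toFun g := (fun i => g (.inl i), fun i => g (.inr (.inl i)), fun i => g (.inr (.inr (.inl i))),
    fun i => g (.inr (.inr (.inr (.inl i)))), fun i => g (.inr (.inr (.inr (.inr i)))))
  invFun p := fun i => match i with
    | .inl i => p.1 i
    | .inr (.inl i) => p.2.1 i
    | .inr (.inr (.inl i)) => p.2.2.1 i
    | .inr (.inr (.inr (.inl i))) => p.2.2.2.1 i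
    | .inr (.inr (.inr (.inr i))) => p.2.2.2.2 i
  left_inv g := by
    funext i
    rcases i with i | i | i | i | i <;> rfl
  right_inv p := rfl
  map_mul' a b := rfl

theorem aux_group (V : Type*) [CommGroup V] [Finite V] (n : ℕ) (h32 : ∀ v : V, v ^ 32 = 1)
    (hc : ∀ k ≤ 5, Nat.card (powMonoidHom (2 ^ k) : V →* V).ker = 2 ^ (n * (32 - 2 ^ (5 - k)))) :
    Nonempty (V ≃* ((i : _) → C (auxf n i))) := by
  classical
  obtain ⟨ι, _, m, hm, ⟨e⟩⟩ := CommGroup.equiv_prod_multiplicative_zmod_of_finite V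
  have hdvd : ∀ i, m i ∣ 2 ^ 5 := by
    intro i
    have h1 := h32 (e.symm (Pi.mulSingle i (Multiplicative.ofAdd 1)))
    rw [← map_pow, map_eq_one_iff _ e.symm.injective] at h1
    have h2 := congrFun h1 i
    simp only [Pi.pow_apply, Pi.mulSingle_eq_same, Pi.one_apply] at h2
    rw [← ofAdd_nsmul] at h2
    have h3 : (32 • (1 : ZMod (m i))) = 0 := h2
    rw [nsmul_one] at h3
    exact (ZMod.natCast_eq_zero_iff _ _).1 h3
  have hm' : ∀ i, m i = 2 ∨ m i = 4 ∨ m i = 8 ∨ m i = 16 ∨ m i = 32 := by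
    intro i
    obtain ⟨a, ha, h⟩ := (Nat.dvd_prime_pow Nat.prime_two).1 (hdvd i)
    have := hm i
    interval_cases a <;> simp_all
  have hne : ∀ i, NeZero (m i) := fun i => ⟨by have := hm i; omega⟩
  let N : ℕ → ℕ := fun j => Fintype.card {i // m i = j}
  have hprod : ∀ k ≤ 5, ∏ i, (m i).gcd (2 ^ k) = 2 ^ (n * (32 - 2 ^ (5 - k))) := by
    intro k hk
    rw [← hc k hk]
    have e1 : (powMonoidHom (2 ^ k) : V →* V).ker ≃
        ((i : ι) → (powMonoidHom (2 ^ k) : C (m i) →* C (m i)).ker) :=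
      { toFun := fun v i => ⟨e v.1 i, by
          have := congrFun (congrArg e v.2) i
          simpa using this⟩
        invFun := fun f => ⟨e.symm (fun i => (f i).1), by
          rw [MonoidHom.mem_ker, powMonoidHom_apply, ← map_pow, map_eq_one_iff _ e.symm.injective]
          funext i
          exact (f i).2⟩
        left_inv := fun v => by ext; simp
        right_inv := fun f => by ext; simp }
    rw [Nat.card_congr e1, Nat.card_pi]
    refine Finset.prod_congr rfl fun i _ => ?_
    rw [IsCyclic.card_powMonoidHom_ker]
    simp
  have hprod2 : ∀ k, ∏ i, (m i).gcd (2 ^ k) =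
      (2 ^ min 1 k) ^ N 2 * (2 ^ min 2 k) ^ N 4 * (2 ^ min 3 k) ^ N 8 * (2 ^ min 4 k) ^ N 16 *
        (2 ^ min 5 k) ^ N 32 := by
    intro k
    have key : ∀ a b : ℕ, Nat.gcd (2 ^ a) (2 ^ b) = 2 ^ min a b := by
      intro a b
      rcases le_total a b with h | h
      · rw [min_eq_left h, Nat.gcd_eq_left (pow_dvd_pow 2 h)]
      · rw [min_eq_right h, Nat.gcd_eq_right (pow_dvd_pow 2 h)]
    have hN : ∀ (j c : ℕ), c ^ N j = ∏ i, if m i = j then c else 1 := by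
      intro j c
      rw [Finset.prod_ite]
      simp [N, Fintype.card_subtype]
    simp only [hN, ← Finset.prod_mul_distrib]
    refine Finset.prod_congr rfl fun i _ => ?_
    rcases hm' i with h | h | h | h | h <;> rw [h]
    · simpa using key 1 k
    · simpa using key 2 k
    · simpa using key 3 k
    · simpa using key 4 k
    · simpa using key 5 k
  have hsum : ∀ k ≤ 5, min 1 k * N 2 + min 2 k * N 4 + min 3 k * N 8 + min 4 k * N 16 +
      min 5 k * N 32 = n * (32 - 2 ^ (5 - k)) := by
    intro k hk
    have := (hprod2 k).symm.trans (hprod k hk)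
    simp only [← pow_mul, ← pow_add] at this
    exact Nat.pow_right_injective le_rfl this
  have s1 := hsum 1 (by norm_num)
  have s2 := hsum 2 (by norm_num)
  have s3 := hsum 3 (by norm_num)
  have s4 := hsum 4 (by norm_num)
  have s5 := hsum 5 (by norm_num)
  norm_num at s1 s2 s3 s4 s5
  have hfib : ∀ j, Nonempty ({i // m i = j} ≃ {i // auxf n i = j}) := by
    intro j
    rw [← Fintype.card_eq]
    have hr : Fintype.card {i // auxf n i = j} =
        (if 32 = j then n else 0) + ((if 16 = j then n else 0) + ((if 8 = j then 2 * n else 0) +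
          ((if 4 = j then 4 * n else 0) + (if 2 = j then 8 * n else 0)))) := by
      rw [Fintype.card_subtype, Finset.card_filter]
      simp only [Fintype.sum_sum_type]
      change (∑ _a : Fin n, if 32 = j then 1 else 0) + ((∑ _a : Fin n, if 16 = j then 1 else 0) +
        ((∑ _a : Fin (2 * n), if 8 = j then 1 else 0) +
        ((∑ _a : Fin (4 * n), if 4 = j then 1 else 0) +
        (∑ _a : Fin (8 * n), if 2 = j then 1 else 0)))) = _
      simp only [Finset.sum_const, Finset.card_univ, Fintype.card_fin, smul_eq_mul, mul_ite,
        mul_one, mul_zero]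
    rw [hr]
    change N j = _
    by_cases hj : j = 2 ∨ j = 4 ∨ j = 8 ∨ j = 16 ∨ j = 32
    · rcases hj with rfl | rfl | rfl | rfl | rfl <;> norm_num <;> omega
    · have : N j = 0 := by
        refine Fintype.card_eq_zero_iff.2 ⟨fun x => hj ?_⟩
        rw [← x.2]
        exact hm' _
      rw [this]
      split_ifs <;> omega
  let σ : ι ≃ _ := Equiv.ofFiberEquiv (f := m) (g := auxf n) (fun j => (hfib j).some)
  have hσ : ∀ i, auxf n (σ i) = m i := fun i => Equiv.ofFiberEquiv_map _ i
  let τ : ((k : _) → C (auxf n k)) →* ((i : ι) → C (auxf n (σ i))) :=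
    { toFun := fun g i => g (σ i)
      map_one' := rfl
      map_mul' := fun _ _ => rfl }
  have hτ : Function.Bijective τ :=
    (Equiv.piCongrLeft (fun i => C (auxf n i)) σ).symm.bijective
  refine ⟨e.trans (MulEquiv.trans (MulEquiv.piCongrRight fun i => ?_)
    (MulEquiv.ofBijective τ hτ).symm)⟩
  exact (ZMod.ringEquivCongr (hσ i).symm).toAddEquiv.toMultiplicative

theorem unit_group_stmt_0 (F : Type*) [Field F] [Fintype F] [CharP F 2]
    (n : ℕ) (hn : 0 < n) (hF : Fintype.card F = 2 ^ n) :
    Nonempty ((MonoidAlgebra F (C 32))ˣ ≃*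
      ((Fin (n) → C 32) × (Fin (n) → C 16) × (Fin (2 * n) → C 8) × (Fin (4 * n) → C 4) × (Fin (8 * n) → C 2) × C (2 ^ n - 1))) := by
  classical
  have hch : CharP (MonoidAlgebra F (C 32)) 2 := charP_of_injective_algebraMap
    (algebraMap F (MonoidAlgebra F (C 32))).injective 2
  have : Finite (MonoidAlgebra F (C 32)) := Finite.of_equiv _
    ((MonoidAlgebra.coeffEquiv (R := F) (M := C 32)).trans Finsupp.equivFunOnFinite).symm
  let ε : MonoidAlgebra F (C 32) →ₐ[F] F := MonoidAlgebra.lift F F (C 32) 1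
  let A := algebraMap F (MonoidAlgebra F (C 32))
  have hεA : ∀ c, ε (A c) = c := fun c => ε.commutes c
  let E : (MonoidAlgebra F (C 32))ˣ →* Fˣ := Units.map (ε : MonoidAlgebra F (C 32) →* F)
  let S : Fˣ →* (MonoidAlgebra F (C 32))ˣ := Units.map (A : F →* MonoidAlgebra F (C 32))
  have hES : ∀ c, E (S c) = c := fun c => Units.ext (hεA c)
  have hpow : ∀ y : MonoidAlgebra F (C 32), y ^ 2 ^ 5 = A (ε y) ^ 2 ^ 5 := by
    intro y
    induction y using MonoidAlgebra.induction_linear with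
    | zero => simp
    | add x y hx hy => rw [add_pow_char_pow, hx, hy, map_add, map_add, add_pow_char_pow]
    | single m r =>
      have hm : m ^ 2 ^ 5 = 1 := by revert m; decide
      have h1 : ε (MonoidAlgebra.single m r) = r := by simp [ε]
      rw [h1, MonoidAlgebra.single_pow, hm, ← map_pow]
      rfl
  have hiff : ∀ u : (MonoidAlgebra F (C 32))ˣ, u ∈ E.ker → u ^ 32 = 1 := by
    intro u hu
    have h1 : ε (u : MonoidAlgebra F (C 32)) = 1 := congrArg Units.val hu
    have h2 := hpow (u : MonoidAlgebra F (C 32))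
    rw [h1, map_one, one_pow] at h2
    exact Units.ext h2
  have hV := aux_group E.ker n (fun v => Subtype.ext (hiff v.1 v.2)) (by
    intro k hk
    rw [← aux_card F n hF k hk]
    refine Nat.card_congr
      { toFun := fun v => ⟨(v.1.1 : MonoidAlgebra F (C 32)) - 1, ?_⟩
        invFun := fun y => ⟨⟨Units.ofPowEqOne (y.1 + 1) (2 ^ k) ?_ (by positivity), ?_⟩, ?_⟩
        left_inv := ?_
        right_inv := ?_ }
    · have h := congrArg (fun v : E.ker => ((v : (MonoidAlgebra F (C 32))ˣ) : MonoidAlgebra F (C 32))) v.2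
      have h' : (v.1.1 : MonoidAlgebra F (C 32)) ^ 2 ^ k = 1 := h
      rw [sub_pow_char_pow, h', one_pow, sub_self]
    · rw [add_pow_char_pow, y.2, one_pow, zero_add]
    · rw [MonoidHom.mem_ker]
      apply Units.ext
      change ε (y.1 + 1) = 1
      have h := congrArg ε y.2
      rw [map_pow, map_zero] at h
      rw [map_add, pow_eq_zero_iff (by positivity) |>.1 h, map_one, zero_add]
    · rw [MonoidHom.mem_ker]
      apply Subtype.ext
      apply Units.ext
      change (y.1 + 1) ^ 2 ^ k = 1
      rw [add_pow_char_pow, y.2, one_pow, zero_add]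
    · intro v
      apply Subtype.ext
      apply Subtype.ext
      apply Units.ext
      simp
    · intro y
      apply Subtype.ext
      simp)
  obtain ⟨eV⟩ := hV
  have eF : Fˣ ≃* C (2 ^ n - 1) := by
    have h : Nat.card Fˣ = 2 ^ n - 1 := by
      rw [Nat.card_eq_fintype_card, Fintype.card_units, hF]
    exact (h ▸ (zmodCyclicMulEquiv (G := Fˣ) inferInstance)).symm
  let P : (MonoidAlgebra F (C 32))ˣ ≃* E.ker × Fˣ :=
    { toFun := fun u => (⟨u * (S (E u))⁻¹, by
        rw [MonoidHom.mem_ker, map_mul, map_inv, hES, mul_inv_cancel]⟩, E u)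
      invFun := fun p => p.1.1 * S p.2
      left_inv := fun u => by simp
      right_inv := fun p => by
        have h : E p.1.1 = 1 := p.1.2
        ext1
        · apply Subtype.ext
          simp [hES, h]
        · simp [hES, h]
      map_mul' := fun a b => by
        ext1
        · apply Subtype.ext
          simp only [map_mul, mul_inv, Prod.fst_mul, Subgroup.coe_mul]
          exact mul_mul_mul_comm _ _ _ _
        · simp }
  let Q : ((Fin (n) → C 32) × (Fin (n) → C 16) × (Fin (2 * n) → C 8) × (Fin (4 * n) → C 4) ×
      (Fin (8 * n) → C 2)) × C (2 ^ n - 1) ≃* ((Fin (n) → C 32) × (Fin (n) → C 16) ×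
      (Fin (2 * n) → C 8) × (Fin (4 * n) → C 4) × (Fin (8 * n) → C 2) × C (2 ^ n - 1)) :=
    { toFun := fun p => (p.1.1, p.1.2.1, p.1.2.2.1, p.1.2.2.2.1, p.1.2.2.2.2, p.2)
      invFun := fun p => ((p.1, p.2.1, p.2.2.1, p.2.2.2.1, p.2.2.2.2.1), p.2.2.2.2.2)
      left_inv := fun _ => rfl
      right_inv := fun _ => rfl
      map_mul' := fun _ _ => rfl }
  exact ⟨P.trans ((MulEquiv.prodCongr (eV.trans (auxE n)) eF).trans Q)⟩
end

section
/- Let F be a finite field of characteristic p > 2 with q = p^n elements, and let G be the cyclic group C_32 of order 32. Then the unit group U(FG) is isomorphic to: C_{p^n-1}^{32} if q ≡ 1 (mod 32); C_{p^n-1}^2 × C_{p^{2n}-1}^{15} if q ≡ -1 (mod 32); C_{p^{8n}-1}^2 × C_{p^{4n}-1}^2 × C_{p^{2n}-1}^3 × C_{p^n-1}^2 if q ≡ 3, -5, 11, or -13 (mod 32); C_{p^{8n}-1}^2 × C_{p^{4n}-1}^2 × C_{p^{2n}-1}^2 × C_{p^n-1}^4 if q ≡ -3, 5, -11, or 13 (mod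 32); C_{p^n-1}^2 × C_{p^{4n}-1}^4 × C_{p^{2n}-1}^7 if q ≡ 7 (mod 32); C_{p^n-1}^8 × C_{p^{2n}-1}^4 × C_{p^{4n}-1}^4 if q ≡ -7 (mod 32); C_{p^n-1}^2 × C_{p^{2n}-1}^{15} if q ≡ 15 (mod 32); C_{p^n-1}^{16} × C_{p^{2n}-1}^8 if q ≡ -15 (mod 32). -/
section helpers


/-- The fixed field of a power of Frobenius. -/
noncomputable def fixF (K : Type*) [Field K] (p : ℕ) [ExpChar K p] (m : ℕ) : Subfield K :=
  RingHom.eqLocusField (iterateFrobenius K p m) (RingHom.id K)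

lemma mem_fixF {K : Type*} [Field K] (p : ℕ) [ExpChar K p] (m : ℕ) (x : K) :
    x ∈ fixF K p m ↔ x ^ p ^ m = x := by
  show iterateFrobenius K p m x = x ↔ _
  rw [iterateFrobenius_def]

open Polynomial in
lemma card_fixF (K : Type*) [Field K] [IsAlgClosed K] (p : ℕ) [Fact p.Prime] [CharP K p]
    (m : ℕ) (hm : m ≠ 0) : Nat.card (fixF K p m) = p ^ m := by
  classical
  have h1 : 1 < p := (Fact.out : p.Prime).one_lt
  have hsep : (X ^ (p ^ m) - X : K[X]).Separable :=
    galois_poly_separable p _ (dvd_pow_self p hm)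
  have hne : (X ^ (p ^ m) - X : K[X]) ≠ 0 := hsep.ne_zero
  have hc := card_rootSet_eq_natDegree (K := K) hsep (IsAlgClosed.splits _)
  rw [FiniteField.X_pow_card_pow_sub_X_natDegree_eq K hm h1] at hc
  rw [← hc, ← Nat.card_eq_fintype_card]
  refine Nat.card_congr (Equiv.subtypeEquivRight fun x => ?_)
  rw [mem_fixF, mem_rootSet]
  simp [hne, sub_eq_zero]

/-- Evaluation of the group algebra at a character. -/
noncomputable def evC (F : Type*) {K : Type*} [Field F] [Field K] [Algebra F K]
    (ψ : AddChar (ZMod 32) K) (j : ZMod 32) : MonoidAlgebra F (C 32) →ₐ[F] K :=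
  MonoidAlgebra.lift F K (C 32) (ψ.mulShift j).toMonoidHom

lemma evC_frob {F K : Type*} [Field F] [Fintype F] [Field K] [Algebra F K]
    (ψ : AddChar (ZMod 32) K) (j : ZMod 32) (x : MonoidAlgebra F (C 32)) :
    evC F ψ ((Fintype.card F : ZMod 32) * j) x = evC F ψ j x ^ Fintype.card F := by
  have : evC F ψ ((Fintype.card F : ZMod 32) * j)
      = (FiniteField.frobeniusAlgHom F K).comp (evC F ψ j) := by
    refine MonoidAlgebra.algHom_ext (fun a => ?_) (Subsingleton.elim _ _)
    simp only [evC, MonoidAlgebra.lift_single, one_smul, AddChar.toMonoidHom_apply,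
      AddChar.mulShift_apply, AlgHom.comp_apply, FiniteField.coe_frobeniusAlgHom]
    rw [mul_assoc, ← nsmul_eq_mul, AddChar.map_nsmul_eq_pow]
  rw [this]; rfl

lemma evC_frob_pow {F K : Type*} [Field F] [Fintype F] [Field K] [Algebra F K]
    (ψ : AddChar (ZMod 32) K) (k : ℕ) (j : ZMod 32) (x : MonoidAlgebra F (C 32)) :
    evC F ψ ((Fintype.card F : ZMod 32) ^ k * j) x = evC F ψ j x ^ (Fintype.card F) ^ k := by
  induction k with
  | zero => simp
  | succ k ih => rw [pow_succ', mul_assoc, evC_frob, ih, ← pow_mul, pow_succ]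

lemma evC_inj {F K : Type*} [Field F] [Field K] [Algebra F K]
    (ψ : AddChar (ZMod 32) K) (hψ : ψ.IsPrimitive) (h32 : (32 : K) ≠ 0)
    (x : MonoidAlgebra F (C 32)) (hx : ∀ j, evC F ψ j x = 0) : x = 0 := by
  apply MonoidAlgebra.coeff_injective
  ext y
  have key : ∀ j, ∑ a : ZMod 32, algebraMap F K (x.coeff (Multiplicative.ofAdd a)) * ψ (j * a) = 0 := by
    intro j
    rw [← hx j, evC, MonoidAlgebra.lift_apply', Finsupp.sum_fintype _ _ (by simp)]
    rfl
  have h2 : ∑ j : ZMod 32, ψ (j * (- y.toAdd)) *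
      ∑ a : ZMod 32, algebraMap F K (x.coeff (Multiplicative.ofAdd a)) * ψ (j * a) = 0 := by
    simp only [key, mul_zero, Finset.sum_const_zero]
  simp only [Finset.mul_sum] at h2
  rw [Finset.sum_comm] at h2
  have h3 : ∀ a : ZMod 32, ∑ j : ZMod 32, ψ (j * (- y.toAdd)) *
      (algebraMap F K (x.coeff (Multiplicative.ofAdd a)) * ψ (j * a))
      = algebraMap F K (x.coeff (Multiplicative.ofAdd a)) * if a = y.toAdd then (32 : K) else 0 := by
    intro a
    have := AddChar.sum_mulShift (a - y.toAdd) hψ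
    simp only [sub_eq_zero, ZMod.card] at this
    push_cast at this
    rw [← this, Finset.mul_sum]
    refine Finset.sum_congr rfl fun j _ => ?_
    rw [sub_eq_neg_add, mul_add, AddChar.map_add_eq_mul]
    ring
  simp only [h3, mul_ite, mul_zero, Finset.sum_ite_eq', Finset.mem_univ, if_true] at h2
  simpa [h32] using h2

lemma main_aux (F : Type*) [Field F] [Fintype F] (p n : ℕ)
    (hp : p.Prime) (hp2 : 2 < p) [CharP F p] (hn : 0 < n)
    (hF : Fintype.card F = p ^ n) {ι : Type} [Fintype ι] (r : ι → ZMod 32) (d m : ι → ℕ)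
    (Q : ZMod 32) (hQ : (p ^ n : ZMod 32) = Q)
    (hd : ∀ i, 0 < d i) (hm : ∀ i, m i = p ^ (d i * n) - 1)
    (hsum : ∑ i, d i = 32) (h1 : ∀ i, Q ^ (d i) * r i = r i)
    (h2 : ∀ j, ∃ i, ∃ k : Fin 8, Q ^ (k : ℕ) * r i = j) :
    Nonempty ((MonoidAlgebra F (C 32))ˣ ≃* (∀ i, C (m i))) := by
  classical
  have : Fact p.Prime := ⟨hp⟩
  let K := AlgebraicClosure F
  have : CharP K p := charP_of_injective_algebraMap (algebraMap F K).injective p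
  have hQ' : (Fintype.card F : ZMod 32) = Q := by rw [hF, ← hQ]; push_cast; rfl
  have h32 : (32 : K) ≠ 0 := by
    intro h
    have h' : ((32 : ℕ) : K) = 0 := by exact_mod_cast h
    rw [CharP.cast_eq_zero_iff K p] at h'
    have : p ∣ 2 := hp.dvd_of_dvd_pow (show p ∣ 2 ^ 5 by simpa using h')
    have := Nat.le_of_dvd (by norm_num) this
    omega
  have : NeZero ((32 : ℕ) : K) := ⟨by exact_mod_cast h32⟩
  obtain ⟨ζ, hζ⟩ := HasEnoughRootsOfUnity.exists_primitiveRoot K 32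
  obtain ⟨ψ, hψ⟩ : ∃ ψ : AddChar (ZMod 32) K, ψ.IsPrimitive :=
    ⟨_, AddChar.zmodChar_primitive_of_primitive_root 32 hζ⟩
  let φ : ∀ i, MonoidAlgebra F (C 32) →+* fixF K p (d i * n) := fun i =>
    (evC F ψ (r i)).toRingHom.codRestrict (fixF K p (d i * n)) (by
      intro x
      rw [mem_fixF]
      show (evC F ψ (r i) x) ^ _ = evC F ψ (r i) x
      have := evC_frob_pow ψ (d i) (r i) x
      rw [hQ', h1, hF, ← pow_mul, mul_comm n] at this
      exact this.symm)
  let Φ : MonoidAlgebra F (C 32) →+* ∀ i, fixF K p (d i * n) := RingHom.pi φ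
  have hinj : Function.Injective Φ := by
    rw [injective_iff_map_eq_zero]
    intro x hx
    apply evC_inj ψ hψ h32
    intro j
    obtain ⟨i, k, hk⟩ := h2 j
    have : evC F ψ (r i) x = 0 := congrArg Subtype.val (congrFun hx i)
    rw [← hk, ← hQ', evC_frob_pow, this, zero_pow]
    exact pow_ne_zero _ Fintype.card_ne_zero
  have hdn : ∀ i, d i * n ≠ 0 := fun i => (Nat.mul_pos (hd i) hn).ne'
  have hfin : ∀ i, Finite (fixF K p (d i * n)) := fun i =>
    Nat.finite_of_card_ne_zero (by rw [card_fixF K p _ (hdn i)]; exact pow_ne_zero _ hp.ne_zero)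
  have hcard : Nat.card (MonoidAlgebra F (C 32)) = Nat.card (∀ i, fixF K p (d i * n)) := by
    rw [Nat.card_pi]
    simp only [fun i => card_fixF K p _ (hdn i)]
    rw [Finset.prod_pow_eq_pow_sum, ← Finset.sum_mul, hsum,
      Nat.card_congr (MonoidAlgebra.coeffEquiv.trans Finsupp.equivFunOnFinite), Nat.card_fun]
    simp [hF, ← pow_mul, mul_comm]
  have hbij : Function.Bijective Φ := (Nat.bijective_iff_injective_and_card Φ).2 ⟨hinj, hcard⟩
  have hc : ∀ i, Nat.card (C (m i)) = Nat.card (fixF K p (d i * n))ˣ := by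
    intro i
    have := Fintype.ofFinite (fixF K p (d i * n))
    rw [Nat.card_units, card_fixF K p _ (hdn i), hm]
    exact Nat.card_zmod _
  exact ⟨((Units.mapEquiv (RingEquiv.ofBijective Φ hbij).toMulEquiv).trans MulEquiv.piUnits).trans
    (MulEquiv.piCongrRight fun i => (mulEquivOfCyclicCardEq (hc i)).symm)⟩

/-- Functions on a disjoint union. -/
def sumPi {ι κ : Type} (A : ι ⊕ κ → Type) [∀ i, Mul (A i)] :
    (∀ i, A i) ≃* ((∀ i, A (.inl i)) × (∀ i, A (.inr i))) :=
  { Equiv.sumPiEquivProdPi A with map_mul' := fun _ _ => rfl }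

lemma main2 (F : Type*) [Field F] [Fintype F] (p n : ℕ)
    (hp : p.Prime) (hp2 : 2 < p) [CharP F p] (hn : 0 < n)
    (hF : Fintype.card F = p ^ n) {a b : ℕ} (r : Fin a ⊕ Fin b → ZMod 32) (da db ma mb : ℕ)
    (Q : ZMod 32) (hQ : (p ^ n : ZMod 32) = Q)
    (hd : 0 < da ∧ 0 < db) (hm : ma = da * n ∧ mb = db * n)
    (hsum : a * da + b * db = 32)
    (h1 : ∀ i, Q ^ (Sum.elim (fun _ => da) (fun _ => db) i) * r i = r i)
    (h2 : ∀ j, ∃ i, ∃ k : Fin 8, Q ^ (k : ℕ) * r i = j) :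
    Nonempty ((MonoidAlgebra F (C 32))ˣ ≃*
      ((Fin a → C (p ^ ma - 1)) × (Fin b → C (p ^ mb - 1)))) := by
  obtain ⟨e⟩ := main_aux F p n hp hp2 hn hF r (Sum.elim (fun _ => da) (fun _ => db))
    (Sum.elim (fun _ => p ^ ma - 1) (fun _ => p ^ mb - 1)) Q hQ
    (by rintro (i | i) <;> simp [hd]) (by rintro (i | i) <;> simp [hm])
    (by simpa using hsum) h1 h2
  exact ⟨e.trans (sumPi _)⟩

lemma main3 (F : Type*) [Field F] [Fintype F] (p n : ℕ)
    (hp : p.Prime) (hp2 : 2 < p) [CharP F p] (hn : 0 < n)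
    (hF : Fintype.card F = p ^ n) {a b c : ℕ} (r : Fin a ⊕ Fin b ⊕ Fin c → ZMod 32)
    (da db dc ma mb mc : ℕ)
    (Q : ZMod 32) (hQ : (p ^ n : ZMod 32) = Q)
    (hd : 0 < da ∧ 0 < db ∧ 0 < dc) (hm : ma = da * n ∧ mb = db * n ∧ mc = dc * n)
    (hsum : a * da + (b * db + c * dc) = 32)
    (h1 : ∀ i, Q ^ (Sum.elim (fun _ => da) (Sum.elim (fun _ => db) (fun _ => dc)) i) * r i = r i)
    (h2 : ∀ j, ∃ i, ∃ k : Fin 8, Q ^ (k : ℕ) * r i = j) :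
    Nonempty ((MonoidAlgebra F (C 32))ˣ ≃*
      ((Fin a → C (p ^ ma - 1)) × (Fin b → C (p ^ mb - 1)) × (Fin c → C (p ^ mc - 1)))) := by
  obtain ⟨e⟩ := main_aux F p n hp hp2 hn hF r
    (Sum.elim (fun _ => da) (Sum.elim (fun _ => db) (fun _ => dc)))
    (Sum.elim (fun _ => p ^ ma - 1) (Sum.elim (fun _ => p ^ mb - 1) (fun _ => p ^ mc - 1))) Q hQ
    (by rintro (i | i | i) <;> simp [hd]) (by rintro (i | i | i) <;> simp [hm])
    (by simpa using hsum) h1 h2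
  exact ⟨e.trans ((sumPi _).trans (MulEquiv.prodCongr (MulEquiv.refl _) (sumPi _)))⟩

lemma main4 (F : Type*) [Field F] [Fintype F] (p n : ℕ)
    (hp : p.Prime) (hp2 : 2 < p) [CharP F p] (hn : 0 < n)
    (hF : Fintype.card F = p ^ n) {a b c d : ℕ} (r : Fin a ⊕ Fin b ⊕ Fin c ⊕ Fin d → ZMod 32)
    (da db dc dd ma mb mc md : ℕ)
    (Q : ZMod 32) (hQ : (p ^ n : ZMod 32) = Q)
    (hd : 0 < da ∧ 0 < db ∧ 0 < dc ∧ 0 < dd)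
    (hm : ma = da * n ∧ mb = db * n ∧ mc = dc * n ∧ md = dd * n)
    (hsum : a * da + (b * db + (c * dc + d * dd)) = 32)
    (h1 : ∀ i, Q ^ (Sum.elim (fun _ => da) (Sum.elim (fun _ => db)
      (Sum.elim (fun _ => dc) (fun _ => dd))) i) * r i = r i)
    (h2 : ∀ j, ∃ i, ∃ k : Fin 8, Q ^ (k : ℕ) * r i = j) :
    Nonempty ((MonoidAlgebra F (C 32))ˣ ≃*
      ((Fin a → C (p ^ ma - 1)) × (Fin b → C (p ^ mb - 1)) × (Fin c → C (p ^ mc - 1)) ×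
        (Fin d → C (p ^ md - 1)))) := by
  obtain ⟨e⟩ := main_aux F p n hp hp2 hn hF r
    (Sum.elim (fun _ => da) (Sum.elim (fun _ => db) (Sum.elim (fun _ => dc) (fun _ => dd))))
    (Sum.elim (fun _ => p ^ ma - 1) (Sum.elim (fun _ => p ^ mb - 1)
      (Sum.elim (fun _ => p ^ mc - 1) (fun _ => p ^ md - 1)))) Q hQ
    (by rintro (i | i | i | i) <;> simp [hd]) (by rintro (i | i | i | i) <;> simp [hm])
    (by simpa using hsum) h1 h2
  exact ⟨e.trans ((sumPi _).trans (MulEquiv.prodCongr (MulEquiv.refl _)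
    ((sumPi _).trans (MulEquiv.prodCongr (MulEquiv.refl _) (sumPi _)))))⟩

end helpers

set_option maxRecDepth 100000 in
set_option maxHeartbeats 4000000 in
theorem unit_group_stmt_1 (F : Type*) [Field F] [Fintype F] (p n : ℕ)
    (hp : p.Prime) (hp2 : 2 < p) [CharP F p] (hn : 0 < n)
    (hF : Fintype.card F = p ^ n) :
    (((p ^ n : ZMod 32) = 1) →
      Nonempty ((MonoidAlgebra F (C 32))ˣ ≃* ((Fin (32) → C (p ^ n - 1))))) ∧
    (((p ^ n : ZMod 32) = -1) →
      Nonempty ((MonoidAlgebra F (C 32))ˣ ≃* ((Fin (2) → C (p ^ n - 1)) × (Fin (15) → C (p ^ (2 * n) - 1))))) ∧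
    ((((p ^ n : ZMod 32) = 3) ∨ ((p ^ n : ZMod 32) = -5) ∨ ((p ^ n : ZMod 32) = 11) ∨ ((p ^ n : ZMod 32) = -13)) →
      Nonempty ((MonoidAlgebra F (C 32))ˣ ≃* ((Fin (2) → C (p ^ (8 * n) - 1)) × (Fin (2) → C (p ^ (4 * n) - 1)) × (Fin (3) → C (p ^ (2 * n) - 1)) × (Fin (2) → C (p ^ n - 1))))) ∧
    ((((p ^ n : ZMod 32) = -3) ∨ ((p ^ n : ZMod 32) = 5) ∨ ((p ^ n : ZMod 32) = -11) ∨ ((p ^ n : ZMod 32) = 13)) →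
      Nonempty ((MonoidAlgebra F (C 32))ˣ ≃* ((Fin (2) → C (p ^ (8 * n) - 1)) × (Fin (2) → C (p ^ (4 * n) - 1)) × (Fin (2) → C (p ^ (2 * n) - 1)) × (Fin (4) → C (p ^ n - 1))))) ∧
    (((p ^ n : ZMod 32) = 7) →
      Nonempty ((MonoidAlgebra F (C 32))ˣ ≃* ((Fin (2) → C (p ^ n - 1)) × (Fin (4) → C (p ^ (4 * n) - 1)) × (Fin (7) → C (p ^ (2 * n) - 1))))) ∧
    (((p ^ n : ZMod 32) = -7) →
      Nonempty ((MonoidAlgebra F (C 32))ˣ ≃* ((Fin (8) → C (p ^ n - 1)) × (Fin (4) → C (p ^ (2 * n) - 1)) × (Fin (4) → C (p ^ (4 * n) - 1))))) ∧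
    (((p ^ n : ZMod 32) = 15) →
      Nonempty ((MonoidAlgebra F (C 32))ˣ ≃* ((Fin (2) → C (p ^ n - 1)) × (Fin (15) → C (p ^ (2 * n) - 1))))) ∧
    (((p ^ n : ZMod 32) = -15) →
      Nonempty ((MonoidAlgebra F (C 32))ˣ ≃* ((Fin (16) → C (p ^ n - 1)) × (Fin (8) → C (p ^ (2 * n) - 1))))) := by
  refine ⟨?_, ?_, ?_, ?_, ?_, ?_, ?_, ?_⟩
  · intro h
    exact main_aux F p n hp hp2 hn hF (fun i : Fin 32 => (i.val : ZMod 32)) (fun _ => 1)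
      (fun _ => p ^ n - 1) 1 h (by simp) (by simp) (by simp) (by simp) (by decide)
  · intro h
    exact main2 F p n hp hp2 hn hF
        (Sum.elim ![0, 16] ![1, 2, 3, 4, 5, 6, 7, 8, 9, 10, 11, 12, 13, 14, 15])
        1 2 n (2 * n) (-1) h (by decide) (by simp) (by decide) (by decide) (by decide)
  · rintro (h | h | h | h)
    · exact main4 F p n hp hp2 hn hF
        (Sum.elim ![1, 5] (Sum.elim ![2, 10] (Sum.elim ![4, 8, 20] ![0, 16])))
        8 4 2 1 (8 * n) (4 * n) (2 * n) n (3) h (by decide) (by simp) (by decide) (by decide) (by decide)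
    · exact main4 F p n hp hp2 hn hF
        (Sum.elim ![1, 5] (Sum.elim ![2, 10] (Sum.elim ![4, 8, 20] ![0, 16])))
        8 4 2 1 (8 * n) (4 * n) (2 * n) n (-5) h (by decide) (by simp) (by decide) (by decide) (by decide)
    · exact main4 F p n hp hp2 hn hF
        (Sum.elim ![1, 5] (Sum.elim ![2, 10] (Sum.elim ![4, 8, 20] ![0, 16])))
        8 4 2 1 (8 * n) (4 * n) (2 * n) n (11) h (by decide) (by simp) (by decide) (by decide) (by decide)
    · exact main4 F p n hp hp2 hn hF
        (Sum.elim ![1, 5] (Sum.elim ![2, 10] (Sum.elim ![4, 8, 20] ![0, 16])))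
        8 4 2 1 (8 * n) (4 * n) (2 * n) n (-13) h (by decide) (by simp) (by decide) (by decide) (by decide)
  · rintro (h | h | h | h)
    · exact main4 F p n hp hp2 hn hF
        (Sum.elim ![1, 3] (Sum.elim ![2, 6] (Sum.elim ![4, 12] ![0, 8, 16, 24])))
        8 4 2 1 (8 * n) (4 * n) (2 * n) n (-3) h (by decide) (by simp) (by decide) (by decide) (by decide)
    · exact main4 F p n hp hp2 hn hF
        (Sum.elim ![1, 3] (Sum.elim ![2, 6] (Sum.elim ![4, 12] ![0, 8, 16, 24])))
        8 4 2 1 (8 * n) (4 * n) (2 * n) n (5) h (by decide) (by simp) (by decide) (by decide) (by decide)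
    · exact main4 F p n hp hp2 hn hF
        (Sum.elim ![1, 3] (Sum.elim ![2, 6] (Sum.elim ![4, 12] ![0, 8, 16, 24])))
        8 4 2 1 (8 * n) (4 * n) (2 * n) n (-11) h (by decide) (by simp) (by decide) (by decide) (by decide)
    · exact main4 F p n hp hp2 hn hF
        (Sum.elim ![1, 3] (Sum.elim ![2, 6] (Sum.elim ![4, 12] ![0, 8, 16, 24])))
        8 4 2 1 (8 * n) (4 * n) (2 * n) n (13) h (by decide) (by simp) (by decide) (by decide) (by decide)
  · intro h
    exact main3 F p n hp hp2 hn hF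
        (Sum.elim ![0, 16] (Sum.elim ![1, 3, 9, 11] ![2, 4, 6, 8, 12, 18, 22]))
        1 4 2 n (4 * n) (2 * n) (7) h (by decide) (by simp) (by decide) (by decide) (by decide)
  · intro h
    exact main3 F p n hp hp2 hn hF
        (Sum.elim ![0, 4, 8, 12, 16, 20, 24, 28] (Sum.elim ![2, 6, 10, 14] ![1, 3, 5, 7]))
        1 2 4 n (2 * n) (4 * n) (-7) h (by decide) (by simp) (by decide) (by decide) (by decide)
  · intro h
    exact main2 F p n hp hp2 hn hF
        (Sum.elim ![0, 16] ![1, 2, 3, 4, 5, 6, 7, 8, 10, 12, 14, 17, 19, 21, 23])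
        1 2 n (2 * n) (15) h (by decide) (by simp) (by decide) (by decide) (by decide)
  · intro h
    exact main2 F p n hp hp2 hn hF
        (Sum.elim ![0, 2, 4, 6, 8, 10, 12, 14, 16, 18, 20, 22, 24, 26, 28, 30] ![1, 3, 5, 7, 9, 11, 13, 15])
        1 2 n (2 * n) (-15) h (by decide) (by simp) (by decide) (by decide) (by decide)
end

section
/- Let F be a finite field of characteristic p > 2 with q = p^n elements, and let G = C_16 × C_2. Then the unit group U(FG) is isomorphic to: C_{p^n-1}^{32} if q ≡ 1 (mod 16); C_{p^n-1}^4 × C_{p^{2n}-1}^{14} if q ≡ -1 (mod 16); C_{p^n-1}^4 × C_{p^{2n}-1}^6 × C_{p^{4n}-1}^4 if q ≡ 3 or -5 (mod 16); C_{p^n-1}^8 × C_{p^{2n}-1}^4 × C_{p^{4n}-1}^4 if q ≡ -3 or 5 (mod 16); C_{p^n-1}^4 × C_{p^{2n}-1}^{14} if q ≡ 7 (mod 16); C_{p^n-1}^{16} × C_{p^{2n}-1}^8 if q ≡ -7 (mod 16). -/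
namespace UG
abbrev G := C 16 × C 2

def rep (k : ℕ) (g : G) : G :=
  (Multiplicative.ofAdd ((min (min (g.1.toAdd.val) (k * g.1.toAdd.val % 16))
    (min (k^2 * g.1.toAdd.val % 16) (k^3 * g.1.toAdd.val % 16)) : ℕ) : ZMod 16), g.2)

def good (k : ℕ) (r : ℕ) : Prop :=
  (∀ g : G, rep k (g ^ k) = rep k g) ∧ (∀ g : G, rep k (rep k g) = rep k g) ∧
  (∀ g : G, rep k g = g ∨ rep k g = g ^ k ∨ rep k g = (g ^ k) ^ k ∨ rep k g = ((g ^ k) ^ k) ^ k) ∧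
  Fintype.card {g : G // rep k g = g} = r ∧ (∀ g h : G, g ^ k = h ^ k → g = h)

instance (k r : ℕ) : Decidable (good k r) := by unfold good; infer_instance

lemma good1 : good 1 32 := by decide +kernel
lemma good3 : good 3 14 := by decide +kernel
lemma good5 : good 5 16 := by decide +kernel
lemma good7 : good 7 18 := by decide +kernel
lemma good9 : good 9 24 := by decide +kernel
lemma good11 : good 11 14 := by decide +kernel
lemma good13 : good 13 16 := by decide +kernel
lemma good15 : good 15 18 := by decide +kernel

lemma G_exp (g : G) : g ^ 16 = 1 := by revert g; decide +kernel

lemma G_pow (g : G) (Q k : ℕ) (h : Q % 16 = k % 16) : g ^ Q = g ^ k := by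
  rw [← Nat.mod_add_div Q 16, ← Nat.mod_add_div k 16, pow_add, pow_add, pow_mul, pow_mul, G_exp, h]
  simp

lemma card_fun (F : Type*) [Fintype F] (k r : ℕ) (h : good k r) :
    Nat.card {f : G → F // ∀ g, f (g ^ k) = f g} = Fintype.card F ^ r := by
  obtain ⟨h1, h2, h3, h4, -⟩ := h
  have e : {f : G → F // ∀ g, f (g ^ k) = f g} ≃ ({g : G // rep k g = g} → F) :=
    { toFun := fun f g => f.1 g.1
      invFun := fun f => ⟨fun g => f ⟨rep k g, h2 g⟩, fun g => by simp only [h1]⟩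
      left_inv := by
        rintro ⟨f, hf⟩
        ext g
        rcases h3 g with h | h | h | h <;> simp [h, hf]
      right_inv := by
        intro f
        ext ⟨g, hg⟩
        simp [hg] }
  rw [Nat.card_congr e, Nat.card_eq_fintype_card, Fintype.card_fun, h4]

section
variable (F : Type*) [Field F] [Fintype F]

lemma pow_q (x : MonoidAlgebra F G) :
    x ^ Fintype.card F = MonoidAlgebra.mapDomain (fun g : G => g ^ Fintype.card F) x := by
  have : FiniteField.frobeniusAlgHom F (MonoidAlgebra F G) =
      MonoidAlgebra.mapDomainAlgHom F F (powMonoidHom (Fintype.card F)) := by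
    apply MonoidAlgebra.algHom_ext
    · intro m
      simp [MonoidAlgebra.single_pow]
    · exact Subsingleton.elim _ _
  exact DFunLike.congr_fun this x

lemma pow_qj (x : MonoidAlgebra F G) (j : ℕ) :
    x ^ (Fintype.card F ^ j) = MonoidAlgebra.mapDomain (fun g : G => g ^ (Fintype.card F ^ j)) x := by
  induction j with
  | zero =>
    simp only [pow_zero, pow_one]
    ext1
    exact Finsupp.mapDomain_id.symm
  | succ j ih =>
    rw [pow_succ, pow_mul, ih, pow_q]
    ext1
    simp only [MonoidAlgebra.mapDomain]
    rw [← Finsupp.mapDomain_comp]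
    congr 1
    ext1 g
    simp [pow_mul]

lemma fixed_iff (x : MonoidAlgebra F G) (j k r : ℕ) (h : good k r)
    (hk : Fintype.card F ^ j % 16 = k % 16) :
    x ^ (Fintype.card F ^ j) = x ↔ ∀ g : G, x.coeff (g ^ k) = x.coeff g := by
  have hinj : Function.Injective (fun g : G => g ^ k) := fun a b hab => h.2.2.2.2 a b hab
  have hsurj := Finite.surjective_of_injective hinj
  rw [pow_qj]
  simp_rw [fun g => G_pow g _ k hk]
  have key : ∀ g, (MonoidAlgebra.mapDomain (fun g : G => g ^ k) x).coeff (g ^ k) = x.coeff g := by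
    intro g
    exact Finsupp.mapDomain_apply hinj x.coeff g
  constructor
  · intro hx g
    rw [← key g, hx]
  · intro hx
    ext g
    obtain ⟨g, rfl⟩ := hsurj g
    exact (key g).trans (hx g).symm

lemma card_fixed (j k r : ℕ) (h : good k r) (hk : Fintype.card F ^ j % 16 = k % 16) :
    Nat.card {x : MonoidAlgebra F G // x ^ (Fintype.card F ^ j) = x} = Fintype.card F ^ r := by
  rw [← card_fun F k r h]
  refine Nat.card_congr (Equiv.subtypeEquiv
    (MonoidAlgebra.coeffEquiv.trans Finsupp.equivFunOnFinite) fun x => ?_)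
  rw [fixed_iff F x j k r h hk]
  rfl

lemma field_fixed (K : Type*) [Field K] [Finite K] (q d j : ℕ) (hq : 1 < q)
    (hK : Nat.card K = q ^ d) :
    Nat.card {x : K // x ^ (q ^ j) = x} = q ^ (Nat.gcd d j) := by
  have hpos : 0 < q ^ j := by positivity
  have e : {x : K // x ^ (q ^ j) = x} ≃ Option ((powMonoidHom (q ^ j - 1) : Kˣ →* Kˣ).ker) := by
    classical
    refine
    { toFun := fun x => if h : x.1 = 0 then none else some ⟨Units.mk0 x.1 h, ?_⟩
      invFun := fun o => o.elim ⟨0, zero_pow hpos.ne'⟩ fun u => ⟨u.1, ?_⟩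
      left_inv := ?_
      right_inv := ?_ }
    · rw [MonoidHom.mem_ker]
      ext
      have := x.2
      have h2 : x.1 ^ (q ^ j - 1) * x.1 = 1 * x.1 := by
        rw [← pow_succ, Nat.sub_add_cancel hpos, this, one_mul]
      simpa using mul_right_cancel₀ h h2
    · have := u.2
      rw [MonoidHom.mem_ker] at this
      have h3 : ((u.1 : Kˣ) : K) ^ (q ^ j - 1) = 1 := by
        simpa using congrArg Units.val this
      calc ((u.1 : Kˣ) : K) ^ (q ^ j) = (u.1 : K) ^ (q ^ j - 1 + 1) := by
            rw [Nat.sub_add_cancel hpos]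
        _ = _ := by rw [pow_succ, h3, one_mul]
    · rintro ⟨x, hx⟩
      by_cases h : x = 0 <;> simp [h]
    · rintro (_ | u)
      · simp
      · simp
  rw [Nat.card_congr e, Finite.card_option, IsCyclic.card_powMonoidHom_ker, Nat.card_units, hK,
    Nat.pow_sub_one_gcd_pow_sub_one]
  exact Nat.sub_add_cancel (Nat.one_le_pow _ _ (by omega))


lemma sum_three {I : Type*} [Fintype I] (d : I → ℕ) (hd : ∀ i, d i = 1 ∨ d i = 2 ∨ d i = 4)
    (f : ℕ → ℕ) : ∑ i, f (d i) = Fintype.card {i // d i = 1} * f 1 +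
      Fintype.card {i // d i = 2} * f 2 + Fintype.card {i // d i = 4} * f 4 := by
  simp only [Fintype.card_subtype, Finset.card_filter, Finset.sum_mul, ← Finset.sum_add_distrib]
  refine Finset.sum_congr rfl fun i _ => ?_
  rcases hd i with h | h | h <;> simp [h]

lemma cyc (K : Type*) [Field K] [Finite K] (m : ℕ) (h : Nat.card K = m) :
    Nonempty (Kˣ ≃* C (m - 1)) :=
  ⟨mulEquivOfCyclicCardEq (by 
    rw [Nat.card_units, h]
    exact ((Nat.card_congr Multiplicative.toAdd).trans (Nat.card_zmod _)).symm)⟩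

lemma assemble {I : Type*} [Fintype I] (K : I → Type*) [∀ i, Field (K i)] [∀ i, Finite (K i)]
    (d : I → ℕ) (hd : ∀ i, d i = 1 ∨ d i = 2 ∨ d i = 4) (q a b c : ℕ)
    (hK : ∀ i, Nat.card (K i) = q ^ d i)
    (ha : Fintype.card {i // d i = 1} = a) (hb : Fintype.card {i // d i = 2} = b)
    (hc : Fintype.card {i // d i = 4} = c) :
    Nonempty ((∀ i, (K i)ˣ) ≃* (Fin a → C (q - 1)) × (Fin b → C (q ^ 2 - 1)) ×
      (Fin c → C (q ^ 4 - 1))) := by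
  classical
  let e1 : {i // d i = 1} ≃ Fin a := Fintype.equivFinOfCardEq ha
  let e2 : {i // d i = 2} ≃ Fin b := Fintype.equivFinOfCardEq hb
  let e3 : {i // d i = 4} ≃ Fin c := Fintype.equivFinOfCardEq hc
  have c1 : ∀ k : Fin a, Nonempty ((K (e1.symm k))ˣ ≃* C (q - 1)) := fun k =>
    cyc _ _ (by rw [hK, (e1.symm k).2, pow_one])
  have c2 : ∀ k : Fin b, Nonempty ((K (e2.symm k))ˣ ≃* C (q ^ 2 - 1)) := fun k =>
    cyc _ _ (by rw [hK, (e2.symm k).2])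
  have c3 : ∀ k : Fin c, Nonempty ((K (e3.symm k))ˣ ≃* C (q ^ 4 - 1)) := fun k =>
    cyc _ _ (by rw [hK, (e3.symm k).2])
  replace c1 := fun k => (c1 k).some
  replace c2 := fun k => (c2 k).some
  replace c3 := fun k => (c3 k).some
  let φ : (∀ i, (K i)ˣ) →* (∀ k : Fin a, (K (e1.symm k))ˣ) × (∀ k : Fin b, (K (e2.symm k))ˣ) ×
      (∀ k : Fin c, (K (e3.symm k))ˣ) :=
    { toFun := fun f => (fun k => f _, fun k => f _, fun k => f _)
      map_one' := rfl
      map_mul' := fun _ _ => rfl }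
  have hφ : Function.Bijective φ := by
    constructor
    · intro f g h
      have h1 := congrArg Prod.fst h
      have h2 := congrArg (fun z => z.2.1) h
      have h3 := congrArg (fun z => z.2.2) h
      funext i
      rcases hd i with hi | hi | hi
      · have := congrFun h1 (e1 ⟨i, hi⟩)
        dsimp [φ] at this
        rwa [e1.symm_apply_apply] at this
      · have := congrFun h2 (e2 ⟨i, hi⟩)
        dsimp [φ] at this
        rwa [e2.symm_apply_apply] at this
      · have := congrFun h3 (e3 ⟨i, hi⟩)
        dsimp [φ] at this
        rwa [e3.symm_apply_apply] at this
    · rintro ⟨u, v, w⟩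
      have key : ∀ i, ∃ x : (K i)ˣ, (∀ k, ∀ h : (e1.symm k : I) = i, h ▸ u k = x) ∧
          (∀ k, ∀ h : (e2.symm k : I) = i, h ▸ v k = x) ∧
          (∀ k, ∀ h : (e3.symm k : I) = i, h ▸ w k = x) := by
        intro i
        rcases hd i with hi | hi | hi
        · obtain ⟨k, rfl⟩ : ∃ k, (e1.symm k : I) = i := ⟨e1 ⟨i, hi⟩, by simp⟩
          refine ⟨u k, ?_, ?_, ?_⟩
          · intro k' h
            obtain rfl := e1.symm.injective (Subtype.ext h)
            rfl
          · intro k' h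
            have := (e2.symm k').2
            rw [h, hi] at this
            omega
          · intro k' h
            have := (e3.symm k').2
            rw [h, hi] at this
            omega
        · obtain ⟨k, rfl⟩ : ∃ k, (e2.symm k : I) = i := ⟨e2 ⟨i, hi⟩, by simp⟩
          refine ⟨v k, ?_, ?_, ?_⟩
          · intro k' h
            have := (e1.symm k').2
            rw [h, hi] at this
            omega
          · intro k' h
            obtain rfl := e2.symm.injective (Subtype.ext h)
            rfl
          · intro k' h
            have := (e3.symm k').2
            rw [h, hi] at this
            omega
        · obtain ⟨k, rfl⟩ : ∃ k, (e3.symm k : I) = i := ⟨e3 ⟨i, hi⟩, by simp⟩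
          refine ⟨w k, ?_, ?_, ?_⟩
          · intro k' h
            have := (e1.symm k').2
            rw [h, hi] at this
            omega
          · intro k' h
            have := (e2.symm k').2
            rw [h, hi] at this
            omega
          · intro k' h
            obtain rfl := e3.symm.injective (Subtype.ext h)
            rfl
      choose f hf1 hf2 hf3 using key
      refine ⟨f, ?_⟩
      refine Prod.ext ?_ (Prod.ext ?_ ?_)
      · funext k
        exact (hf1 _ k rfl).symm
      · funext k
        exact (hf2 _ k rfl).symm
      · funext k
        exact (hf3 _ k rfl).symm
  exact ⟨(MulEquiv.ofBijective φ hφ).trans ((MulEquiv.piCongrRight c1).prodCongr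
    ((MulEquiv.piCongrRight c2).prodCongr (MulEquiv.piCongrRight c3)))⟩

lemma main (k k2 r r2 a b c : ℕ) (h1 : good k r) (h2 : good k2 r2)
    (hk : Fintype.card F % 16 = k % 16) (hk2 : k ^ 2 % 16 = k2 % 16) (hk4 : k ^ 4 % 16 = 1)
    (e1 : a + b + c = r) (e2 : a + 2 * b + 2 * c = r2) (e4 : a + 2 * b + 4 * c = 32) :
    Nonempty ((MonoidAlgebra F G)ˣ ≃* (Fin a → C (Fintype.card F - 1)) ×
      (Fin b → C (Fintype.card F ^ 2 - 1)) × (Fin c → C (Fintype.card F ^ 4 - 1))) := by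
  classical
  have f1 := card_fixed F 1 k r h1 (by rw [pow_one, hk])
  have f2 := card_fixed F 2 k2 r2 h2 (by rw [Nat.pow_mod, hk, ← Nat.pow_mod, hk2])
  have hq4 : Fintype.card F ^ 4 % 16 = 1 % 16 := by rw [Nat.pow_mod, hk, ← Nat.pow_mod, hk4]
  have f4 := card_fixed F 4 1 32 good1 hq4
  have fix4 : ∀ x : MonoidAlgebra F G, x ^ (Fintype.card F ^ 4) = x := fun x =>
    (fixed_iff F x 4 1 32 good1 hq4).2 (by simp)
  have hq : 1 < Fintype.card F := Fintype.one_lt_card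
  set q := Fintype.card F with hqdef
  have : Finite (MonoidAlgebra F G) :=
    Finite.of_equiv _ (MonoidAlgebra.coeffEquiv.trans Finsupp.equivFunOnFinite).symm
  have hred : IsReduced (MonoidAlgebra F G) := by
    refine ⟨fun x hx => ?_⟩
    obtain ⟨m, hm⟩ := hx
    have hx : ∀ m : ℕ, x ^ ((q ^ 4) ^ m) = x := by
      intro m
      induction m with
      | zero => simp
      | succ m ih => rw [pow_succ, pow_mul, ih, fix4]
    rw [← hx m]
    refine pow_eq_zero_of_le (Nat.lt_pow_self ?_).le hm
    exact Nat.one_lt_pow (by norm_num) hq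
  have : Fintype (MaximalSpectrum (MonoidAlgebra F G)) := Fintype.ofFinite _
  let K : MaximalSpectrum (MonoidAlgebra F G) → Type _ := fun I => MonoidAlgebra F G ⧸ I.asIdeal
  let _ : ∀ i, Field (K i) := fun i => Ideal.Quotient.field i.asIdeal
  have : ∀ i, Finite (K i) := fun i => Finite.of_surjective _ (Ideal.Quotient.mk_surjective (I := i.asIdeal))
  let E : MonoidAlgebra F G ≃+* (∀ i, K i) := (IsArtinianRing.equivPi (MonoidAlgebra F G)).toRingEquiv
  have hcard : ∀ i, ∃ d : ℕ, Nat.card (K i) = q ^ d := by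
    intro i
    let _ : Algebra F (K i) := inferInstanceAs (Algebra F (_ ⧸ i.asIdeal))
    refine ⟨Module.finrank F (K i), ?_⟩
    rw [Module.natCard_eq_pow_finrank (K := F), Nat.card_eq_fintype_card]
  choose d hd using hcard
  have hd4 : ∀ i, d i = 1 ∨ d i = 2 ∨ d i = 4 := by
    intro i
    have := field_fixed (K i) q (d i) 4 hq (hd i)
    have hall : ∀ x : K i, x ^ (q ^ 4) = x := by
      intro x
      obtain ⟨x, rfl⟩ := Ideal.Quotient.mk_surjective x
      exact congrArg (Ideal.Quotient.mk i.asIdeal) (fix4 x)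
    rw [Nat.card_congr (Equiv.subtypeUnivEquiv hall), hd] at this
    have h5 := Nat.pow_right_injective hq this
    have h6 : d i ∣ 4 := by
      rw [h5]; exact Nat.gcd_dvd_right _ _
    have h7 : d i ≤ 4 := Nat.le_of_dvd (by norm_num) h6
    generalize d i = m at h6 h7
    interval_cases m <;> revert h6 <;> decide
  have hfix : ∀ j s : ℕ, Nat.card {x : MonoidAlgebra F G // x ^ (q ^ j) = x} = q ^ s →
      ∑ i, Nat.gcd (d i) j = s := by
    intro j s hs
    have e : {x : MonoidAlgebra F G // x ^ (q ^ j) = x} ≃ ∀ i, {y : K i // y ^ (q ^ j) = y} :=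
      (Equiv.subtypeEquiv (p := fun x : MonoidAlgebra F G => x ^ (q ^ j) = x)
        (q := fun f : ∀ i, K i => ∀ i, f i ^ (q ^ j) = f i) E.toEquiv (fun x => by
          rw [← E.injective.eq_iff, map_pow, funext_iff]; rfl)).trans (Equiv.subtypePiEquivPi (p := fun i (y : K i) => y ^ (q ^ j) = y))
    rw [Nat.card_congr e, Nat.card_pi] at hs
    simp_rw [fun i => field_fixed (K i) q (d i) j hq (hd i)] at hs
    rw [Finset.prod_pow_eq_pow_sum] at hs
    exact Nat.pow_right_injective hq hs
  have g1 := hfix 1 r f1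
  have g2 := hfix 2 r2 f2
  have g4 := hfix 4 32 f4
  rw [sum_three d hd4 (fun m => Nat.gcd m 1)] at g1
  rw [sum_three d hd4 (fun m => Nat.gcd m 2)] at g2
  rw [sum_three d hd4 (fun m => Nat.gcd m 4)] at g4
  norm_num at g1 g2 g4
  obtain ⟨Φ⟩ := assemble K d hd4 q a b c hd (by omega) (by omega) (by omega)
  exact ⟨((Units.mapEquiv E.toMulEquiv).trans MulEquiv.piUnits).trans Φ⟩

end
end UG

theorem unit_group_stmt_3 (F : Type*) [Field F] [Fintype F] (p n : ℕ)
    (hp : p.Prime) (hp2 : 2 < p) [CharP F p] (hn : 0 < n)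
    (hF : Fintype.card F = p ^ n) :
    (((p ^ n : ZMod 16) = 1) →
      Nonempty ((MonoidAlgebra F (C 16 × C 2))ˣ ≃* ((Fin (32) → C (p ^ n - 1))))) ∧
    (((p ^ n : ZMod 16) = -1) →
      Nonempty ((MonoidAlgebra F (C 16 × C 2))ˣ ≃* ((Fin (4) → C (p ^ n - 1)) × (Fin (14) → C (p ^ (2 * n) - 1))))) ∧
    ((((p ^ n : ZMod 16) = 3) ∨ ((p ^ n : ZMod 16) = -5)) →
      Nonempty ((MonoidAlgebra F (C 16 × C 2))ˣ ≃* ((Fin (4) → C (p ^ n - 1)) × (Fin (6) → C (p ^ (2 * n) - 1)) × (Fin (4) → C (p ^ (4 * n) - 1))))) ∧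
    ((((p ^ n : ZMod 16) = -3) ∨ ((p ^ n : ZMod 16) = 5)) →
      Nonempty ((MonoidAlgebra F (C 16 × C 2))ˣ ≃* ((Fin (8) → C (p ^ n - 1)) × (Fin (4) → C (p ^ (2 * n) - 1)) × (Fin (4) → C (p ^ (4 * n) - 1))))) ∧
    (((p ^ n : ZMod 16) = 7) →
      Nonempty ((MonoidAlgebra F (C 16 × C 2))ˣ ≃* ((Fin (4) → C (p ^ n - 1)) × (Fin (14) → C (p ^ (2 * n) - 1))))) ∧
    (((p ^ n : ZMod 16) = -7) →
      Nonempty ((MonoidAlgebra F (C 16 × C 2))ˣ ≃* ((Fin (16) → C (p ^ n - 1)) × (Fin (8) → C (p ^ (2 * n) - 1))))) := by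
  have hz : ∀ k : ℕ, ((p : ZMod 16) ^ n = (k : ZMod 16)) → Fintype.card F % 16 = k % 16 := by
    intro k h
    rw [hF]
    exact (ZMod.natCast_eq_natCast_iff' (p ^ n) k 16).1 (by push_cast; exact h)
  have m := UG.main F
  have h2n : p ^ (2 * n) = (p ^ n) ^ 2 := by rw [← pow_mul, mul_comm]
  have h4n : p ^ (4 * n) = (p ^ n) ^ 4 := by rw [← pow_mul, mul_comm]
  rw [hF] at m hz
  rw [h2n, h4n]
  refine ⟨fun h => ?_, fun h => ?_, fun h => ?_, fun h => ?_, fun h => ?_, fun h => ?_⟩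
  · obtain ⟨e⟩ := m 1 1 32 32 32 0 0 UG.good1 UG.good1 (hz 1 (by rw [h]; rfl))
      rfl rfl rfl rfl rfl
    exact ⟨e.trans (((MulEquiv.refl _).prodCongr MulEquiv.prodUnique).trans MulEquiv.prodUnique)⟩
  · obtain ⟨e⟩ := m 15 1 18 32 4 14 0 UG.good15 UG.good1 (hz 15 (by rw [h]; rfl))
      rfl rfl rfl rfl rfl
    exact ⟨e.trans ((MulEquiv.refl _).prodCongr MulEquiv.prodUnique)⟩
  · rcases h with h | h
    · exact m 3 9 14 24 4 6 4 UG.good3 UG.good9 (hz 3 (by rw [h]; rfl)) rfl rfl rfl rfl rfl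
    · exact m 11 9 14 24 4 6 4 UG.good11 UG.good9 (hz 11 (by rw [h]; rfl)) rfl rfl rfl rfl rfl
  · rcases h with h | h
    · exact m 13 9 16 24 8 4 4 UG.good13 UG.good9 (hz 13 (by rw [h]; rfl)) rfl rfl rfl rfl rfl
    · exact m 5 9 16 24 8 4 4 UG.good5 UG.good9 (hz 5 (by rw [h]; rfl)) rfl rfl rfl rfl rfl
  · obtain ⟨e⟩ := m 7 1 18 32 4 14 0 UG.good7 UG.good1 (hz 7 (by rw [h]; rfl))
      rfl rfl rfl rfl rfl
    exact ⟨e.trans ((MulEquiv.refl _).prodCongr MulEquiv.prodUnique)⟩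
  · obtain ⟨e⟩ := m 9 1 24 32 16 8 0 UG.good9 UG.good1 (hz 9 (by rw [h]; rfl))
      rfl rfl rfl rfl rfl
    exact ⟨e.trans ((MulEquiv.refl _).prodCongr MulEquiv.prodUnique)⟩
end

section
/- Let F be a finite field of characteristic 2 with q = 2^n elements, and let G = C_8 × C_4. Then the unit group of the group algebra FG is isomorphic to C_8^n × C_4^{5n} × C_2^{18n} × C_{2^n - 1}. -/
namespace UG

set_option linter.unusedSectionVars false

/-- number of solutions of `w ^ k = 1` -/
noncomputable def N (k : ℕ) (W : Type*) [Monoid W] : ℕ := Nat.card {w : W // w ^ k = 1}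

lemma N_congr {W X : Type*} [Monoid W] [Monoid X] (k : ℕ) (e : W ≃* X) : N k W = N k X := by
  refine Nat.card_congr (e.toEquiv.subtypeEquiv fun w => ?_)
  change w ^ k = 1 ↔ (e w) ^ k = 1
  rw [← map_pow, map_eq_one_iff e e.injective]

lemma N_prod {W X : Type*} [Monoid W] [Monoid X] (k : ℕ) : N k (W × X) = N k W * N k X := by
  unfold N
  rw [← Nat.card_prod]
  refine Nat.card_congr ⟨fun w => (⟨w.1.1, ?_⟩, ⟨w.1.2, ?_⟩), fun w => ⟨(w.1.1, w.2.1), ?_⟩,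
    fun _ => rfl, fun _ => rfl⟩
  · exact congrArg Prod.fst w.2
  · exact congrArg Prod.snd w.2
  · exact Prod.ext w.1.2 w.2.2

lemma N_pi {W A : Type*} [Monoid W] [Finite A] (k : ℕ) : N k (A → W) = N k W ^ Nat.card A := by
  unfold N
  have := Fintype.ofFinite A
  rw [← Nat.card_fun]
  refine Nat.card_congr ⟨fun w a => ⟨w.1 a, ?_⟩, fun w => ⟨fun a => (w a).1, ?_⟩,
    fun _ => rfl, fun _ => rfl⟩
  · exact congrFun w.2 a
  · exact funext fun a => (w a).2

lemma N_C (k m r : ℕ) [NeZero m] (h : Fintype.card {w : C m // w ^ k = 1} = r) : N k (C m) = r := by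
  unfold N
  rw [Nat.card_eq_fintype_card, h]

lemma N_all (k r : ℕ) (W : Type*) [Monoid W] (h : ∀ w : W, w ^ k = 1) (hr : Nat.card W = r) :
    N k W = r := by
  unfold N
  rw [← hr]
  exact Nat.card_congr (Equiv.subtypeUnivEquiv h)

lemma exists_split (ι : Type) [Finite ι] (m : ι → ℕ) (hm : ∀ i, m i = 8 ∨ m i = 4 ∨ m i = 2) :
    Nonempty ((∀ i, C (m i)) ≃*
      (({i // m i = 8} → C 8) × ({i // m i = 4} → C 4) × ({i // m i = 2} → C 2))) := by
  classical
  let c : ∀ {a b : ℕ} (h : a = b), C a ≃* C b := fun h =>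
    AddEquiv.toMultiplicative (ZMod.ringEquivCongr h).toAddEquiv
  let f : (∀ i, C (m i)) →*
      (({i // m i = 8} → C 8) × ({i // m i = 4} → C 4) × ({i // m i = 2} → C 2)) :=
    { toFun := fun g => (fun i => c i.2 (g i), fun i => c i.2 (g i), fun i => c i.2 (g i))
      map_one' := by
        refine Prod.ext ?_ (Prod.ext ?_ ?_) <;> funext i <;> exact map_one (c i.2)
      map_mul' := fun x y => by
        refine Prod.ext ?_ (Prod.ext ?_ ?_) <;> funext i <;> exact map_mul (c i.2) _ _ }
  refine ⟨MulEquiv.ofBijective f ⟨?_, ?_⟩⟩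
  · intro x y h
    funext i
    rcases hm i with hi | hi | hi
    · exact (c hi).injective (congrFun (congrArg Prod.fst h) ⟨i, hi⟩)
    · exact (c hi).injective (congrFun (congrArg (fun z => z.2.1) h) ⟨i, hi⟩)
    · exact (c hi).injective (congrFun (congrArg (fun z => z.2.2) h) ⟨i, hi⟩)
  · rintro ⟨x, y, z⟩
    refine ⟨fun i => if h : m i = 8 then (c h).symm (x ⟨i, h⟩) else
      if h : m i = 4 then (c h).symm (y ⟨i, h⟩) else
      if h : m i = 2 then (c h).symm (z ⟨i, h⟩) else 1, ?_⟩
    refine Prod.ext ?_ (Prod.ext ?_ ?_) <;> funext ⟨i, hi⟩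
    · change c hi (dite (m i = 8) _ _) = _
      rw [dif_pos hi]; exact (c hi).apply_symm_apply _
    · change c hi (dite (m i = 8) _ _) = _
      rw [dif_neg (by omega), dif_pos hi]; exact (c hi).apply_symm_apply _
    · change c hi (dite (m i = 8) _ _) = _
      rw [dif_neg (show ¬ m i = 8 by omega), dif_neg (show ¬ m i = 4 by omega), dif_pos hi]; exact (c hi).apply_symm_apply _

lemma classify (W : Type*) [CommGroup W] [Finite W] (n : ℕ) (h8 : ∀ w : W, w ^ 8 = 1)
    (n2 : N 2 W = 2 ^ (24 * n)) (n4 : N 4 W = 2 ^ (30 * n)) (n8 : N 8 W = 2 ^ (31 * n)) :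
    Nonempty (W ≃* (Fin n → C 8) × (Fin (5 * n) → C 4) × (Fin (18 * n) → C 2)) := by
  classical
  obtain ⟨ι, _, m, hm1, ⟨e⟩⟩ := CommGroup.equiv_prod_multiplicative_zmod_of_finite W
  have hm : ∀ i, m i = 8 ∨ m i = 4 ∨ m i = 2 := by
    intro i
    have h1 : ∀ x : (∀ i, C (m i)), x ^ 8 = 1 := by
      intro x
      rw [← e.apply_symm_apply x, ← map_pow, h8, map_one]
    have h2 := congrFun (h1 fun i => Multiplicative.ofAdd 1) i
    have h3 : ((8 : ℕ) : ZMod (m i)) = 0 := by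
      have h4 := congrArg Multiplicative.toAdd h2
      simpa using h4
    rw [ZMod.natCast_eq_zero_iff] at h3
    have h5 : m i ≤ 8 := Nat.le_of_dvd (by norm_num) h3
    have h6 := hm1 i
    clear h2
    generalize m i = r at *
    interval_cases r <;> omega
  obtain ⟨e'⟩ := exists_split ι m hm
  have E := e.trans e'
  generalize hA : {i // m i = 8} = A at E
  generalize hB : {i // m i = 4} = B at E
  generalize hD : {i // m i = 2} = D at E
  have : Finite A := by subst hA; infer_instance
  have : Finite B := by subst hB; infer_instance
  have : Finite D := by subst hD; infer_instance
  rw [N_congr _ E, N_prod, N_prod, N_pi, N_pi, N_pi] at n2 n4 n8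
  rw [N_C 2 8 (2 ^ 1) (by decide), N_C 2 4 (2 ^ 1) (by decide), N_C 2 2 (2 ^ 1) (by decide)] at n2
  rw [N_C 4 8 (2 ^ 2) (by decide), N_C 4 4 (2 ^ 2) (by decide), N_C 4 2 (2 ^ 1) (by decide)] at n4
  rw [N_C 8 8 (2 ^ 3) (by decide), N_C 8 4 (2 ^ 2) (by decide), N_C 8 2 (2 ^ 1) (by decide)] at n8
  simp only [← pow_mul, ← pow_add] at n2 n4 n8
  have m2 := Nat.pow_right_injective le_rfl n2
  have m4 := Nat.pow_right_injective le_rfl n4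
  have m8 := Nat.pow_right_injective le_rfl n8
  have a1 : Nat.card A = n := by omega
  have a2 : Nat.card B = 5 * n := by omega
  have a3 : Nat.card D = 18 * n := by omega
  exact ⟨E.trans (MulEquiv.prodCongr (MulEquiv.arrowCongr (Finite.equivFinOfCardEq a1) (MulEquiv.refl (C 8)))
    (MulEquiv.prodCongr (MulEquiv.arrowCongr (Finite.equivFinOfCardEq a2) (MulEquiv.refl (C 4)))
      (MulEquiv.arrowCongr (Finite.equivFinOfCardEq a3) (MulEquiv.refl (C 2)))))⟩

section alg

variable (F : Type*) [Field F] [Fintype F] [CharP F 2] (G : Type) [CommGroup G] [Finite G]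

instance charFG : CharP (MonoidAlgebra F G) 2 :=
  charP_of_injective_algebraMap (algebraMap F (MonoidAlgebra F G)).injective 2

lemma pow_formula (k : ℕ) (a : MonoidAlgebra F G) :
    a ^ 2 ^ k = MonoidAlgebra.mapRingHom G (iterateFrobenius F 2 k)
      (MonoidAlgebra.mapDomainRingHom F (powMonoidHom (2 ^ k) : G →* G) a) := by
  have : iterateFrobenius (MonoidAlgebra F G) 2 k =
      (MonoidAlgebra.mapRingHom G (iterateFrobenius F 2 k)).comp
      (MonoidAlgebra.mapDomainRingHom F (powMonoidHom (2 ^ k) : G →* G)) := by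
    ext x : 2
    · simp [iterateFrobenius_def, MonoidAlgebra.single_pow]
    · simp [iterateFrobenius_def, MonoidAlgebra.single_pow]
  exact DFunLike.congr_fun this a

lemma pow_zero_iff (k : ℕ) (a : MonoidAlgebra F G) :
    a ^ 2 ^ k = 0 ↔
      MonoidAlgebra.mapDomainRingHom F ((powMonoidHom (2 ^ k) : G →* G).rangeRestrict) a = 0 := by
  rw [pow_formula]
  have i1 : Function.Injective (MonoidAlgebra.mapRingHom G (iterateFrobenius F 2 k)) := by
    intro x y h
    ext g
    have := congrArg (fun z => z.coeff g) h
    simp only [MonoidAlgebra.coeff_mapRingHom] at this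
    exact (iterateFrobenius F 2 k).injective (by simpa using this)
  have i2 : Function.Injective (MonoidAlgebra.mapDomainRingHom F
      ((powMonoidHom (2 ^ k) : G →* G).range.subtype)) :=
    MonoidAlgebra.mapDomain_injective Subtype.val_injective
  have : MonoidAlgebra.mapDomainRingHom F (powMonoidHom (2 ^ k) : G →* G) =
     (MonoidAlgebra.mapDomainRingHom F ((powMonoidHom (2 ^ k) : G →* G).range.subtype)).comp
      (MonoidAlgebra.mapDomainRingHom F ((powMonoidHom (2 ^ k) : G →* G).rangeRestrict)) := by
    rw [← MonoidAlgebra.mapDomainRingHom_comp]; rfl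
  rw [map_eq_zero_iff _ i1, this, RingHom.comp_apply, map_eq_zero_iff _ i2]

lemma card_FG (H : Type) [Finite H] :
    Nat.card (MonoidAlgebra F H) = Fintype.card F ^ Nat.card H := by
  rw [Nat.card_congr (MonoidAlgebra.coeffEquiv.trans Finsupp.equivFunOnFinite), Nat.card_fun,
    Nat.card_eq_fintype_card]

lemma card_nil (k : ℕ) :
    Nat.card {a : MonoidAlgebra F G // a ^ 2 ^ k = 0} *
      Fintype.card F ^ Nat.card (powMonoidHom (2 ^ k) : G →* G).range =
      Fintype.card F ^ Nat.card G := by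
  set φ := MonoidAlgebra.mapDomainRingHom F ((powMonoidHom (2 ^ k) : G →* G).rangeRestrict) with hφ
  have hs : Function.Surjective φ := by
    intro y
    obtain ⟨x, hx⟩ := Finsupp.mapDomain_surjective (M := F)
      (powMonoidHom (2 ^ k) : G →* G).rangeRestrict_surjective y.coeff
    exact ⟨.ofCoeff x, by ext : 1; simpa [hφ] using hx⟩
  have h1 : Nat.card {a : MonoidAlgebra F G // a ^ 2 ^ k = 0} = Nat.card φ.toAddMonoidHom.ker :=
    Nat.card_congr (Equiv.subtypeEquivRight fun a => pow_zero_iff F G k a)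
  have h2 := AddSubgroup.card_eq_card_quotient_mul_card_addSubgroup φ.toAddMonoidHom.ker
  rw [Nat.card_congr (QuotientAddGroup.quotientKerEquivOfSurjective φ.toAddMonoidHom hs).toEquiv,
    card_FG, card_FG] at h2
  rw [h1, h2, mul_comm]

lemma N_units (k : ℕ) :
    N (2 ^ k) (MonoidAlgebra F G)ˣ = Nat.card {a : MonoidAlgebra F G // a ^ 2 ^ k = 0} := by
  have key : ∀ a : MonoidAlgebra F G, (a - 1) ^ 2 ^ k = a ^ 2 ^ k - 1 := fun a => by
    rw [sub_pow_char_pow, one_pow]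
  refine Nat.card_congr (Equiv.ofBijective
    (fun u => ⟨(u.1 : MonoidAlgebra F G) - 1, ?_⟩) ⟨?_, ?_⟩)
  · rw [key, ← Units.val_pow_eq_pow_val, u.2, Units.val_one, sub_self]
  · intro u v h
    have := congrArg Subtype.val h
    exact Subtype.ext (Units.ext (sub_left_injective this))
  · rintro ⟨a, ha⟩
    have h1 : (a + 1) ^ 2 ^ k = 1 := by
      have := key (a + 1)
      rw [add_sub_cancel_right, ha] at this
      exact (sub_eq_zero.mp this.symm)
    refine ⟨⟨Units.ofPowEqOne (a + 1) (2 ^ k) h1 (by positivity), Units.pow_ofPowEqOne _ _⟩, ?_⟩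
    exact Subtype.ext (by simp)

/-- augmentation -/
noncomputable def aug : MonoidAlgebra F G →ₐ[F] F := MonoidAlgebra.lift F F G 1

/-- augmentation on units -/
noncomputable def augU : (MonoidAlgebra F G)ˣ →* Fˣ := Units.map (aug F G : MonoidAlgebra F G →* F)

lemma N_ker (k : ℕ) : N (2 ^ k) (augU F G).ker = N (2 ^ k) (MonoidAlgebra F G)ˣ := by
  refine Nat.card_congr (Equiv.ofBijective (fun u => ⟨u.1.1, ?_⟩) ⟨?_, ?_⟩)
  · exact congrArg Subtype.val u.2
  · intro u v h
    exact Subtype.ext (Subtype.ext (congrArg (fun z => z.1) h))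
  · rintro ⟨u, hu⟩
    refine ⟨⟨⟨u, ?_⟩, Subtype.ext hu⟩, rfl⟩
    rw [MonoidHom.mem_ker]
    ext
    apply (iterateFrobenius F 2 k).injective
    have := congrArg (fun z => ((augU F G z : Fˣ) : F)) hu
    simpa [iterateFrobenius_def] using this

lemma pow_all (k : ℕ) (hk : ∀ g : G, g ^ 2 ^ k = 1) (u : (augU F G).ker) : u ^ 2 ^ k = 1 := by
  have h1 : ∀ a : MonoidAlgebra F G, a ^ 2 ^ k = algebraMap F _ (aug F G a ^ 2 ^ k) := by
    intro a
    have : iterateFrobenius (MonoidAlgebra F G) 2 k =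
      (algebraMap F (MonoidAlgebra F G)).comp
        ((iterateFrobenius F 2 k).comp (aug F G : MonoidAlgebra F G →+* F)) := by
      ext x : 2
      · simp [iterateFrobenius_def, MonoidAlgebra.single_pow, aug]
      · simp [iterateFrobenius_def, MonoidAlgebra.single_pow, aug, hk, MonoidAlgebra.one_def]
    exact DFunLike.congr_fun this a
  have h2 : aug F G (u.1 : MonoidAlgebra F G) = 1 := congrArg Units.val u.2
  refine Subtype.ext (Units.ext ?_)
  change (u.1 : MonoidAlgebra F G) ^ 2 ^ k = 1
  rw [h1, h2, one_pow, map_one]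

lemma unit_split : Nonempty ((augU F G).ker × Fˣ ≃* (MonoidAlgebra F G)ˣ) := by
  let s : Fˣ →* (MonoidAlgebra F G)ˣ := Units.map (algebraMap F (MonoidAlgebra F G) : F →* _)
  have hs : ∀ c, augU F G (s c) = c := by
    intro c
    ext
    exact (aug F G).commutes (c : F)
  refine ⟨MulEquiv.ofBijective ((augU F G).ker.subtype.coprod s) ⟨?_, ?_⟩⟩
  · rw [injective_iff_map_eq_one]
    rintro ⟨v, c⟩ h
    have h' : v.1 * s c = 1 := h
    have h2 := congrArg (augU F G) h'
    rw [map_mul, hs, v.2, one_mul, map_one] at h2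
    subst h2
    rw [map_one, mul_one] at h'
    exact Prod.ext (Subtype.ext h') rfl
  · intro u
    refine ⟨(⟨u * (s (augU F G u))⁻¹, ?_⟩, augU F G u), ?_⟩
    · rw [MonoidHom.mem_ker, map_mul, map_inv, hs, mul_inv_cancel]
    · change u * (s (augU F G u))⁻¹ * s (augU F G u) = u
      rw [inv_mul_cancel_right]

end alg

end UG

theorem unit_group_stmt_4 (F : Type*) [Field F] [Fintype F] [CharP F 2]
    (n : ℕ) (hn : 0 < n) (hF : Fintype.card F = 2 ^ n) :
    Nonempty ((MonoidAlgebra F (C 8 × C 4))ˣ ≃*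
      ((Fin (n) → C 8) × (Fin (5 * n) → C 4) × (Fin (18 * n) → C 2) × C (2 ^ n - 1))) := by
  classical
  have hcard : ∀ k r : ℕ, Fintype.card (powMonoidHom (2 ^ k) : C 8 × C 4 →* C 8 × C 4).range = r →
      r ≤ 32 →
      UG.N (2 ^ k) (UG.augU F (C 8 × C 4)).ker = 2 ^ ((32 - r) * n) := by
    intro k r hr hr'
    have h := UG.card_nil F (C 8 × C 4) k
    rw [← UG.N_units, ← UG.N_ker, Nat.card_eq_fintype_card, hr, hF] at h
    have h32 : Nat.card (C 8 × C 4) = (32 - r) + r := by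
      rw [Nat.sub_add_cancel hr']; simp
    rw [h32, pow_add, ← pow_mul 2 n (32 - r), mul_comm n] at h
    exact Nat.eq_of_mul_eq_mul_right (by positivity) h
  have h8 : ∀ w : (UG.augU F (C 8 × C 4)).ker, w ^ 8 = 1 :=
    UG.pow_all F (C 8 × C 4) 3 (by decide)
  have : Finite (MonoidAlgebra F (C 8 × C 4)) :=
    Finite.of_equiv _ (MonoidAlgebra.coeffEquiv.trans Finsupp.equivFunOnFinite).symm
  obtain ⟨e1⟩ := UG.classify (UG.augU F (C 8 × C 4)).ker n h8
    (hcard 1 8 (by decide) (by norm_num)) (hcard 2 2 (by decide) (by norm_num))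
    (hcard 3 1 (by decide) (by norm_num))
  obtain ⟨e2⟩ := UG.unit_split F (C 8 × C 4)
  have hc : Nat.card Fˣ = Nat.card (C (2 ^ n - 1)) := by
    rw [Nat.card_units, Nat.card_eq_fintype_card, hF]
    exact (Nat.card_zmod _).symm
  let e3 : Fˣ ≃* C (2 ^ n - 1) := mulEquivOfCyclicCardEq hc
  exact ⟨e2.symm.trans ((MulEquiv.prodCongr e1 e3).trans
    (MulEquiv.prodAssoc.trans (MulEquiv.prodCongr (MulEquiv.refl _) MulEquiv.prodAssoc)))⟩
end

section
/- Let F be a finite field of characteristic 2 with q = 2^n elements, and let G = C_8 × C_2 × C_2. Then the unit group of the group algebra FG is isomorphic to C_8^n × C_4^n × C_2^{26n} × C_{2^n - 1}. -/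
lemma fib {ι ι' : Type} [Fintype ι] [Fintype ι'] (m : ι → ℕ) (m' : ι' → ℕ)
    (h : ∀ k, Fintype.card {i // m i = k} = Fintype.card {i // m' i = k}) :
    ∃ e : ι ≃ ι', ∀ i, m' (e i) = m i := by
  refine ⟨Equiv.ofFiberEquiv (f := m) (g := m') (fun k => Fintype.equivOfCardEq (h k)), fun i => ?_⟩
  exact Equiv.ofFiberEquiv_map _ i

lemma piEquiv {ι ι' : Type} (m : ι → ℕ) (m' : ι' → ℕ) (e : ι ≃ ι') (he : ∀ i, m' (e i) = m i) :
    Nonempty ((∀ i, C (m i)) ≃* (∀ i, C (m' i))) := by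
  obtain rfl : m = fun i => m' (e i) := funext fun i => (he i).symm
  refine ⟨MulEquiv.symm
    { toFun := fun f i => f (e i)
      invFun := (Equiv.piCongrLeft (fun i => C (m' i)) e)
      left_inv := fun f => by
        ext i
        obtain ⟨j, rfl⟩ := e.surjective i
        exact congrArg _ (Equiv.piCongrLeft_apply_apply (P := fun i => C (m' i)) e (fun i => f (e i)) j)
      right_inv := fun f => by
        funext j
        exact (Equiv.piCongrLeft_apply_apply (P := fun i => C (m' i)) e f j)
      map_mul' := fun f g => rfl }⟩

lemma cK28 : Nat.card {x : C 8 // x^2=1} = 2 := by rw [Nat.card_eq_fintype_card]; decide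
lemma cK48 : Nat.card {x : C 8 // x^4=1} = 4 := by rw [Nat.card_eq_fintype_card]; decide
lemma cK88 : Nat.card {x : C 8 // x^8=1} = 8 := by rw [Nat.card_eq_fintype_card]; decide
lemma cK24 : Nat.card {x : C 4 // x^2=1} = 2 := by rw [Nat.card_eq_fintype_card]; decide
lemma cK44 : Nat.card {x : C 4 // x^4=1} = 4 := by rw [Nat.card_eq_fintype_card]; decide
lemma cK84 : Nat.card {x : C 4 // x^8=1} = 4 := by rw [Nat.card_eq_fintype_card]; decide
lemma cK22 : Nat.card {x : C 2 // x^2=1} = 2 := by rw [Nat.card_eq_fintype_card]; decide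
lemma cK42 : Nat.card {x : C 2 // x^4=1} = 2 := by rw [Nat.card_eq_fintype_card]; decide
lemma cK82 : Nat.card {x : C 2 // x^8=1} = 2 := by rw [Nat.card_eq_fintype_card]; decide

lemma cardPi {V : Type*} [CommGroup V] {ι : Type} [Fintype ι] (m : ι → ℕ)
    (e : V ≃* ∀ i, C (m i)) (k : ℕ) :
    Nat.card {v : V // v ^ k = 1} = ∏ i, Nat.card {x : C (m i) // x ^ k = 1} := by
  rw [← Nat.card_pi]
  refine Nat.card_congr (Equiv.trans (Equiv.subtypeEquiv e.toEquiv (q := fun f => ∀ i, f i ^ k = 1)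
    fun v => ?_) (Equiv.subtypePiEquivPi (p := fun i (x : C (m i)) => x ^ k = 1)))
  rw [← e.injective.eq_iff, map_pow, map_one, funext_iff]
  rfl

lemma grp {V : Type*} [CommGroup V] [Finite V] (n : ℕ)
    (h8 : ∀ v : V, v ^ 8 = 1)
    (c2 : Nat.card {v : V // v ^ 2 = 1} = 2 ^ (28 * n))
    (c4 : Nat.card {v : V // v ^ 4 = 1} = 2 ^ (30 * n))
    (c8 : Nat.card {v : V // v ^ 8 = 1} = 2 ^ (31 * n)) :
    Nonempty (V ≃* ((Fin n → C 8) × (Fin n → C 4) × (Fin (26 * n) → C 2))) := by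
  classical
  obtain ⟨ι, _, m, hm, ⟨e⟩⟩ := CommGroup.equiv_prod_multiplicative_zmod_of_finite V
  have hm' : ∀ i, m i = 2 ∨ m i = 4 ∨ m i = 8 := by
    intro i
    have h1 : (Pi.mulSingle i (Multiplicative.ofAdd 1) : ∀ i, C (m i)) ^ 8 = 1 := by
      have := h8 (e.symm (Pi.mulSingle i (Multiplicative.ofAdd 1)))
      rwa [← map_pow, map_eq_one_iff _ e.symm.injective] at this
    have h2 := congrFun h1 i
    simp only [Pi.pow_apply, Pi.mulSingle_eq_same, Pi.one_apply, ← ofAdd_nsmul] at h2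
    have h3 : (8 : ℕ) • (1 : ZMod (m i)) = 0 := Multiplicative.ofAdd.injective h2
    rw [nsmul_one, ZMod.natCast_eq_zero_iff] at h3
    have := hm i
    have h4 := Nat.le_of_dvd (by norm_num) h3
    clear h1 h2
    generalize m i = k at *
    interval_cases k <;> simp_all
  have key : ∀ (k : ℕ) (w : ℕ → ℕ), (∀ j, j = 2 ∨ j = 4 ∨ j = 8 →
      Nat.card {x : C j // x ^ k = 1} = 2 ^ (w j)) →
      Nat.card {v : V // v ^ k = 1} = 2 ^ (w 2 * Fintype.card {i // m i = 2} +
        w 4 * Fintype.card {i // m i = 4} + w 8 * Fintype.card {i // m i = 8}) := by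
    intro k w hw
    rw [cardPi m e, Finset.prod_congr rfl (fun i _ => hw (m i) (hm' i)), Finset.prod_pow_eq_pow_sum]
    congr 1
    simp only [Fintype.card_subtype, Finset.card_filter, Finset.mul_sum, ← Finset.sum_add_distrib]
    refine Finset.sum_congr rfl fun i _ => ?_
    rcases hm' i with h | h | h <;> simp [h]
  have k2 := key 2 (fun _ => 1) (by
      rintro j (rfl | rfl | rfl)
      · exact cK22
      · exact cK24
      · exact cK28)
  have k4 := key 4 (fun j => if j = 2 then 1 else 2)
    (by
      rintro j (rfl | rfl | rfl)
      · exact cK42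
      · exact cK44
      · exact cK48)
  have k8 := key 8 (fun j => if j = 2 then 1 else if j = 4 then 2 else 3)
    (by
      rintro j (rfl | rfl | rfl)
      · exact cK82
      · exact cK84
      · exact cK88)
  rw [c2] at k2
  rw [c4] at k4
  rw [c8] at k8
  have k2 := Nat.pow_right_injective le_rfl k2
  have k4 := Nat.pow_right_injective le_rfl k4
  have k8 := Nat.pow_right_injective le_rfl k8
  norm_num at k2 k4 k8
  let m' : Fin n ⊕ (Fin n ⊕ Fin (26 * n)) → ℕ := Sum.elim (fun _ => 8) (Sum.elim (fun _ => 4) (fun _ => 2))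
  obtain ⟨f, hf⟩ := fib m m' (by
    have e' : ∀ k, Fintype.card {i // m' i = k} =
        (if 8 = k then n else 0) + ((if 4 = k then n else 0) + (if 2 = k then 26 * n else 0)) := by
      intro k
      rw [Fintype.card_subtype, Finset.card_filter, Fintype.sum_sum_type, Fintype.sum_sum_type]
      change (∑ _ : Fin n, if 8 = k then 1 else 0) + ((∑ _ : Fin n, if 4 = k then 1 else 0) +
        (∑ _ : Fin (26 * n), if 2 = k then 1 else 0)) = _
      simp only [Finset.sum_const, Finset.card_univ, Fintype.card_fin, smul_eq_mul, mul_ite, mul_one,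
        mul_zero]
    intro k
    rw [e']
    by_cases h2 : k = 2
    · subst h2; simp; omega
    by_cases h4 : k = 4
    · subst h4; simp; omega
    by_cases h8 : k = 8
    · subst h8; simp; omega
    rw [if_neg (Ne.symm h2), if_neg (Ne.symm h4), if_neg (Ne.symm h8), Fintype.card_eq_zero_iff]
    refine ⟨fun ⟨i, hi⟩ => ?_⟩
    have := hm' i
    omega)
  obtain ⟨g⟩ := piEquiv m m' f hf
  refine ⟨e.trans (g.trans ?_)⟩
  exact
    { toFun := fun f => (fun i => f (Sum.inl i), fun i => f (Sum.inr (Sum.inl i)),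
        fun i => f (Sum.inr (Sum.inr i)))
      invFun := fun f => fun | Sum.inl i => f.1 i | Sum.inr (Sum.inl i) => f.2.1 i
                             | Sum.inr (Sum.inr i) => f.2.2 i
      left_inv := fun f => by ext (i | i | i) <;> rfl
      right_inv := fun f => rfl
      map_mul' := fun f g => rfl }

abbrev G8 := C 8 × C 2 × C 2

lemma r2 : Nat.card (powMonoidHom (2^1) : G8 →* G8).range = 4 := by
  rw [Nat.card_eq_fintype_card]; decide
lemma r4 : Nat.card (powMonoidHom (2^2) : G8 →* G8).range = 2 := by
  rw [Nat.card_eq_fintype_card]; decide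
lemma r8 : Nat.card (powMonoidHom (2^3) : G8 →* G8).range = 1 := by
  rw [Nat.card_eq_fintype_card]; decide

section
variable {F : Type*} [Field F] [CharP F 2]

lemma powEq {G : Type*} [CommGroup G] (j : ℕ) (a : MonoidAlgebra F G) :
    a ^ 2 ^ j = MonoidAlgebra.mapRingHom G (iterateFrobenius F 2 j)
      (MonoidAlgebra.mapDomainRingHom F (powMonoidHom (2 ^ j)) a) := by
  haveI : CharP (MonoidAlgebra F G) 2 :=
    charP_of_injective_algebraMap (algebraMap F (MonoidAlgebra F G)).injective 2
  change iterateFrobenius (MonoidAlgebra F G) 2 j a = _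
  rw [← RingHom.comp_apply]
  congr 1
  ext x
  · simp [iterateFrobenius_def, MonoidAlgebra.single_pow]
  · simp [iterateFrobenius_def, MonoidAlgebra.single_pow]

lemma mapOne {G : Type*} [CommGroup G] : MonoidAlgebra.mapDomainRingHom F (1 : G →* G) =
    (algebraMap F (MonoidAlgebra F G)).comp (MonoidAlgebra.lift F F G 1 : MonoidAlgebra F G →ₐ[F] F) := by
  ext x
  · simp
  · simp [MonoidAlgebra.one_def]

lemma cardMA (G : Type*) [Finite G] : Nat.card (MonoidAlgebra F G) = Nat.card F ^ Nat.card G := by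
  have := Fintype.ofFinite G
  rw [Nat.card_congr (MonoidAlgebra.coeffEquiv.trans Finsupp.equivFunOnFinite), Nat.card_fun]

lemma cardRoots [Finite F] {G : Type*} [CommGroup G] [Finite G] (j : ℕ) :
    Nat.card {a : MonoidAlgebra F G // a ^ 2 ^ j = 1} =
      Nat.card F ^ (Nat.card G - Nat.card (powMonoidHom (2^j) : G →* G).range) := by
  set p : G →* G := powMonoidHom (2 ^ j) with hp
  let φ := MonoidAlgebra.mapDomainRingHom F p.rangeRestrict
  have hφ : Function.Surjective φ := by
    intro b
    induction b using MonoidAlgebra.induction_on with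
    | of g =>
      obtain ⟨x, hx⟩ := p.rangeRestrict_surjective g
      exact ⟨MonoidAlgebra.of F G x, by simp [φ, hx]⟩
    | add x y hx hy =>
      obtain ⟨x, rfl⟩ := hx
      obtain ⟨y, rfl⟩ := hy
      exact ⟨x + y, map_add _ _ _⟩
    | smul r x hx => 
      obtain ⟨x, rfl⟩ := hx
      refine ⟨MonoidAlgebra.single 1 r * x, ?_⟩
      rw [map_mul]
      simp [φ, Algebra.smul_def]
  have h1 : ∀ a : MonoidAlgebra F G, a ^ 2 ^ j = 1 ↔ a - 1 ∈ φ.toAddMonoidHom.ker := by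
    intro a
    have hc : p = p.range.subtype.comp p.rangeRestrict := by ext; rfl
    have hi : Function.Injective (MonoidAlgebra.mapDomainRingHom F p.range.subtype) :=
      MonoidAlgebra.mapDomain_injective p.range.subtype_injective
    have hj : Function.Injective (MonoidAlgebra.mapRingHom G (iterateFrobenius F 2 j)) :=
      MonoidAlgebra.map_injective _ (iterateFrobenius F 2 j).injective
    have hd : MonoidAlgebra.mapDomainRingHom F p a =
        MonoidAlgebra.mapDomainRingHom F p.range.subtype (φ a) := by
      rw [← RingHom.comp_apply, ← MonoidAlgebra.mapDomainRingHom_comp, ← hc]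
    rw [powEq, map_eq_one_iff _ hj, ← hp, hd, map_eq_one_iff _ hi, AddMonoidHom.mem_ker]
    change φ a = 1 ↔ φ (a - 1) = 0
    rw [map_sub, map_one, sub_eq_zero]
  have h2 : Nat.card {a : MonoidAlgebra F G // a ^ 2 ^ j = 1} = Nat.card φ.toAddMonoidHom.ker :=
    Nat.card_congr (Equiv.subtypeEquiv (Equiv.subRight 1) h1)
  have h3 := AddSubgroup.card_eq_card_quotient_mul_card_addSubgroup φ.toAddMonoidHom.ker
  rw [Nat.card_congr (QuotientAddGroup.quotientKerEquivOfSurjective φ.toAddMonoidHom hφ).toEquiv,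
    cardMA, cardMA] at h3
  rw [h2]
  have hle : Nat.card p.range ≤ Nat.card G := Subgroup.card_le_card_group _
  have hpos : 0 < Nat.card F := Nat.card_pos
  refine Nat.eq_of_mul_eq_mul_left (pow_pos hpos (Nat.card p.range)) ?_
  rw [← h3, ← pow_add, Nat.add_sub_cancel' hle]

end

lemma unitRoots {R : Type*} [CommRing R] (k : ℕ) (hk : k ∣ 8) (hk0 : k ≠ 0) :
    Nat.card {v : (powMonoidHom 8 : Rˣ →* Rˣ).ker // v ^ k = 1} = Nat.card {a : R // a ^ k = 1} := by
  refine Nat.card_congr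
    { toFun := fun v => ⟨((v.1 : Rˣ) : R), by
        have := v.2
        simpa using congrArg (fun w : (powMonoidHom 8 : Rˣ →* Rˣ).ker => ((w : Rˣ) : R)) this⟩
      invFun := fun a => ⟨⟨Units.ofPowEqOne a.1 k a.2 hk0, by
        obtain ⟨d, hd⟩ := hk
        rw [MonoidHom.mem_ker]
        ext
        simp [hd, pow_mul, a.2]⟩, by ext; simp [a.2]⟩
      left_inv := fun v => by ext; simp
      right_inv := fun a => by ext; simp }

theorem unit_group_stmt_6 (F : Type*) [Field F] [Fintype F] [CharP F 2]
    (n : ℕ) (hn : 0 < n) (hF : Fintype.card F = 2 ^ n) :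
    Nonempty ((MonoidAlgebra F (C 8 × C 2 × C 2))ˣ ≃*
      ((Fin (n) → C 8) × (Fin (n) → C 4) × (Fin (26 * n) → C 2) × C (2 ^ n - 1))) := by
  have hF' : Nat.card F = 2 ^ n := by rw [Nat.card_eq_fintype_card, hF]
  have hG : Nat.card G8 = 32 := by
    rw [Nat.card_eq_fintype_card]; rfl
  let R := MonoidAlgebra F G8
  haveI : Finite R := Finite.of_equiv _ (MonoidAlgebra.coeffEquiv.trans Finsupp.equivFunOnFinite).symm
  haveI : Finite Rˣ := inferInstance
  let V := (powMonoidHom 8 : Rˣ →* Rˣ).ker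
  obtain ⟨eV⟩ := grp (V := V) n
    (fun v => by ext1; exact v.2)
    (by
      have := cardRoots (F := F) (G := G8) 1
      rw [unitRoots 2 (by norm_num) (by norm_num)]
      rw [r2, hG, hF', ← pow_mul, mul_comm] at this
      exact this)
    (by
      have := cardRoots (F := F) (G := G8) 2
      rw [unitRoots 4 (by norm_num) (by norm_num)]
      rw [r4, hG, hF', ← pow_mul, mul_comm] at this
      exact this)
    (by
      have := cardRoots (F := F) (G := G8) 3
      rw [unitRoots 8 (by norm_num) (by norm_num)]
      rw [r8, hG, hF', ← pow_mul, mul_comm] at this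
      exact this)
  let ε : R →+* F := (MonoidAlgebra.lift F F G8 1 : R →ₐ[F] F)
  let ι : F →+* R := algebraMap F R
  have hει : ∀ x, ε (ι x) = x := fun x => (MonoidAlgebra.lift F F G8 1 : R →ₐ[F] F).commutes x
  have hp8 : ∀ a : R, a ^ 8 = ι (ε a) ^ 8 := by
    have h1 : (powMonoidHom (2 ^ 3) : G8 →* G8) = 1 := by
      ext1 x; revert x; decide
    intro a
    have h2 := powEq 3 a
    have h3 := powEq 3 (ι (ε a))
    rw [h1] at h2 h3
    have h4 : (MonoidAlgebra.mapDomainRingHom F (1 : G8 →* G8)) = ι.comp ε := mapOne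
    rw [h4, RingHom.comp_apply] at h2 h3
    rw [hει] at h3
    exact h2.trans h3.symm
  let E : Rˣ →* Fˣ := Units.map ε
  let S : Fˣ →* Rˣ := Units.map ι
  have hES : ∀ x, E (S x) = x := fun x => Units.ext (hει x)
  have hu8 : ∀ u : Rˣ, u ^ 8 = S (E u) ^ 8 := fun u => Units.ext (by
    simpa [E, S] using hp8 u)
  have hV : ∀ v : V, E v = 1 := by
    intro v
    have h1 : (v : Rˣ) ^ 8 = 1 := v.2
    have h2 : ((E v : Fˣ) : F) ^ 2 ^ 3 = 1 := by
      have := congrArg (fun u => ((E u : Fˣ) : F)) h1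
      simpa using this
    ext
    exact (map_eq_one_iff (iterateFrobenius F 2 3) (iterateFrobenius F 2 3).injective).1 h2
  let eU : Rˣ ≃* V × Fˣ :=
    { toFun := fun u => (⟨u / S (E u), by
        rw [MonoidHom.mem_ker]
        simp only [powMonoidHom_apply, div_pow, ← hu8, div_self']⟩, E u)
      invFun := fun x => x.1 * S x.2
      left_inv := fun u => by simp
      right_inv := fun x => by
        ext1
        · ext1; simp [hV, hES]
        · simp [hV, hES]
      map_mul' := fun u v => by
        ext1
        · ext1; simp [mul_div_mul_comm]
        · simp }
  have hc : Nat.card Fˣ = 2 ^ n - 1 := by rw [Nat.card_units, hF']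
  have eF : Fˣ ≃* C (2 ^ n - 1) := (hc ▸ zmodCyclicMulEquiv (G := Fˣ) inferInstance).symm
  exact ⟨eU.trans ((eV.prodCongr eF).trans (MulEquiv.prodAssoc.trans
    ((MulEquiv.refl _).prodCongr MulEquiv.prodAssoc)))⟩
end

section
/- Let F be a finite field of characteristic p > 2 with q = p^n elements, and let G = C_8 × C_2 × C_2. Then the unit group U(FG) is isomorphic to: C_{p^n-1}^{32} if q ≡ 1 (mod 8); C_{p^n-1}^8 × C_{p^{2n}-1}^{12} if q ≡ -1 (mod 8); C_{p^n-1}^8 × C_{p^{2n}-1}^{12} if q ≡ 3 (mod 8); C_{p^n-1}^{16} × C_{p^{2n}-1}^8 if q ≡ -3 (mod 8). -/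
noncomputable def eChar {L : Type*} [CommRing L] (m : ℕ) [NeZero m] (z : L) (h : z ^ m = 1) : C m →* L where
  toFun a := z ^ (Multiplicative.toAdd a).val
  map_one' := by simp
  map_mul' a b := by
    rw [toAdd_mul, ZMod.val_add, ← pow_eq_pow_mod _ h, pow_add]

noncomputable def chi {L : Type*} [CommRing L] (z : L) (h : z ^ 8 = 1) (j k : ZMod 2) :
    C 8 × C 2 × C 2 →* L :=
  MonoidHom.coprod (eChar 8 z h)
    (MonoidHom.coprod (eChar 2 ((-1) ^ j.val) (by rw [← pow_mul, mul_comm, pow_mul]; simp))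
      (eChar 2 ((-1) ^ k.val) (by rw [← pow_mul, mul_comm, pow_mul]; simp)))

theorem chi_apply {L : Type*} [CommRing L] (z : L) (h : z ^ 8 = 1) (j k : ZMod 2)
    (g : C 8 × C 2 × C 2) :
    chi z h j k g = z ^ (Multiplicative.toAdd g.1).val *
      (((-1) ^ j.val) ^ (Multiplicative.toAdd g.2.1).val *
       ((-1) ^ k.val) ^ (Multiplicative.toAdd g.2.2).val) := rfl

theorem sgn_inj {L : Type*} [Field L] (h2 : (2 : L) ≠ 0) (j j' : ZMod 2)
    (h : (-1 : L) ^ j.val = (-1) ^ j'.val) : j = j' := by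
  have h1 : (-1 : L) ≠ 1 := by
    intro h; apply h2; linear_combination -h
  fin_cases j <;> fin_cases j'
  · rfl
  · exfalso; apply h1; simpa [ZMod.val] using h.symm
  · exfalso; apply h1; simpa [ZMod.val] using h
  · rfl

theorem chi_inj {L : Type*} [Field L] (h2 : (2 : L) ≠ 0) {z w : L} (hz : z ^ 8 = 1) (hw : w ^ 8 = 1)
    (j k j' k' : ZMod 2) (h : chi z hz j k = chi w hw j' k') : z = w ∧ j = j' ∧ k = k' := by
  have H := fun g => DFunLike.congr_fun h g
  simp only [chi_apply] at H
  refine ⟨?_, sgn_inj h2 _ _ ?_, sgn_inj h2 _ _ ?_⟩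
  · simpa [ZMod.val_one_eq_one_mod] using H (Multiplicative.ofAdd 1, 1, 1)
  · simpa [ZMod.val_one_eq_one_mod] using H (1, Multiplicative.ofAdd 1, 1)
  · simpa [ZMod.val_one_eq_one_mod] using H (1, 1, Multiplicative.ofAdd 1)

/-- separation -/
theorem sep {F K : Type*} [Field F] [Field K] [Algebra F K] (h2 : (2 : K) ≠ 0) (ζ : K)
    (hζ : IsPrimitiveRoot ζ 8) (hz : ∀ i : ZMod 8, (ζ ^ i.val) ^ 8 = 1)
    (x : MonoidAlgebra F (C 8 × C 2 × C 2))
    (hx : ∀ (i : ZMod 8) (j k : ZMod 2),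
      MonoidAlgebra.lift F K _ (chi (ζ ^ i.val) (hz i) j k) x = 0) : x = 0 := by
  let v : (ZMod 8 × ZMod 2 × ZMod 2) → ((C 8 × C 2 × C 2) → K) :=
    fun t => ⇑(chi (ζ ^ t.1.val) (hz t.1) t.2.1 t.2.2)
  have hv : LinearIndependent K v := by
    refine (linearIndependent_monoidHom (C 8 × C 2 × C 2) K).comp
      (fun t : ZMod 8 × ZMod 2 × ZMod 2 => chi (ζ ^ t.1.val) (hz t.1) t.2.1 t.2.2) ?_
    rintro ⟨i, j, k⟩ ⟨i', j', k'⟩ h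
    obtain ⟨a, rfl, rfl⟩ := chi_inj h2 _ _ _ _ _ _ h
    have := hζ.pow_inj (ZMod.val_lt i) (ZMod.val_lt i') a
    rw [ZMod.val_injective _ this]
  have hs : Submodule.span K (Set.range v) = ⊤ := by
    apply hv.span_eq_top_of_card_eq_finrank'
    rw [Module.finrank_fintype_fun_eq_card]
    rfl
  let φ : ((C 8 × C 2 × C 2) → K) →ₗ[K] K :=
    ∑ g, (algebraMap F K (x.coeff g)) • LinearMap.proj g
  have hφ : φ = 0 := by
    apply LinearMap.ext_on_range hs
    rintro ⟨i, j, k⟩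
    have := hx i j k
    rw [MonoidAlgebra.lift_apply', Finsupp.sum_fintype _ _ (by simp)] at this
    simpa [φ, v, Algebra.smul_def] using this
  ext g
  have := DFunLike.congr_fun hφ (Pi.single g 1)
  classical
  simpa [φ, Pi.single_apply] using this

theorem frob_lift {F K : Type*} [Field F] [Fintype F] [Field K] [Algebra F K] (ψ χ : C 8 × C 2 × C 2 →* K)
    (h : ∀ g, χ g = ψ g ^ Fintype.card F) (x : MonoidAlgebra F (C 8 × C 2 × C 2)) :
    MonoidAlgebra.lift F K _ χ x = (MonoidAlgebra.lift F K _ ψ x) ^ Fintype.card F := by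
  have : MonoidAlgebra.lift F K _ χ =
      (FiniteField.frobeniusAlgHom F K).comp (MonoidAlgebra.lift F K _ ψ) := by
    ext g
    simp [h]
  rw [this]; rfl

theorem decomp {F K : Type*} [Field F] [Fintype F] [Field K] [Algebra F K] (h2 : (2 : K) ≠ 0)
    (hK : Module.finrank F K = 2) (ζ : K) (hζ : IsPrimitiveRoot ζ 8)
    (hfix : ∀ y : K, y ^ Fintype.card F = y → ∃ x : F, algebraMap F K x = y)
    (Q : ZMod 8) (hQ : (Fintype.card F : ZMod 8) = Q) (hodd : Odd (Fintype.card F)) (a b : ℕ)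
    (s : Fin a → ZMod 8) (t : Fin b → ZMod 8) (hab : a + 2 * b = 8) (hs : ∀ i, Q * s i = s i)
    (hcov : ∀ i, (∃ j, s j = i) ∨ (∃ j, t j = i) ∨ (∃ j, Q * t j = i)) :
    Nonempty (MonoidAlgebra F (C 8 × C 2 × C 2) ≃+*
      ((Fin a × ZMod 2 × ZMod 2 → F) × (Fin b × ZMod 2 × ZMod 2 → K))) := by
  have : FiniteDimensional F K := Module.finite_of_finrank_pos (by omega)
  have hz : ∀ i : ZMod 8, (ζ ^ i.val) ^ 8 = 1 := fun i => by
    rw [← pow_mul, mul_comm, pow_mul, hζ.pow_eq_one, one_pow]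
  have hq : ∀ i : ZMod 8, ζ ^ (Q * i).val = (ζ ^ i.val) ^ Fintype.card F := by
    intro i
    rw [← hQ, ZMod.val_mul, ← pow_eq_pow_mod _ hζ.pow_eq_one, ZMod.val_natCast, ← pow_mul,
      mul_comm, pow_mul, pow_mul, ← pow_eq_pow_mod _ (hz i)]
  have hfr : ∀ (i : ZMod 8) (j k : ZMod 2) (x : MonoidAlgebra F (C 8 × C 2 × C 2)),
      MonoidAlgebra.lift F K _ (chi (ζ ^ (Q * i).val) (hz _) j k) x =
       (MonoidAlgebra.lift F K _ (chi (ζ ^ i.val) (hz _) j k) x) ^ Fintype.card F := by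
    intro i j k x
    apply frob_lift
    intro g
    simp only [chi_apply, hq, mul_pow]
    congr 1
    · exact pow_right_comm _ _ _
    · congr 1
      · rw [← pow_mul, ← pow_mul, mul_comm _ (Fintype.card F), pow_mul _ (Fintype.card F), hodd.neg_one_pow]
      · rw [← pow_mul, ← pow_mul, mul_comm _ (Fintype.card F), pow_mul _ (Fintype.card F), hodd.neg_one_pow]
  choose z hzz using fun i => hfix (ζ ^ (s i).val) (by rw [← hq, hs])
  have hz8 : ∀ i, z i ^ 8 = 1 := fun i => by
    apply (algebraMap F K).injective
    rw [map_pow, hzz, hz, map_one]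
  let Φ : MonoidAlgebra F (C 8 × C 2 × C 2) →ₐ[F]
      ((Fin a × ZMod 2 × ZMod 2 → F) × (Fin b × ZMod 2 × ZMod 2 → K)) :=
    AlgHom.prod
      (AlgHom.pi fun u => MonoidAlgebra.lift F F _ (chi (z u.1) (hz8 _) u.2.1 u.2.2))
      (AlgHom.pi fun u => MonoidAlgebra.lift F K _ (chi (ζ ^ (t u.1).val) (hz _) u.2.1 u.2.2))
  have hinj : Function.Injective Φ.toLinearMap := by
    rw [← LinearMap.ker_eq_bot, LinearMap.ker_eq_bot']
    intro x hx
    have hx1 : ∀ i j k, MonoidAlgebra.lift F F _ (chi (z i) (hz8 _) j k) x = 0 := fun i j k =>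
      congrFun (congrArg Prod.fst hx) (i, j, k)
    have hx2 : ∀ i j k, MonoidAlgebra.lift F K _ (chi (ζ ^ (t i).val) (hz _) j k) x = 0 :=
      fun i j k => congrFun (congrArg Prod.snd hx) (i, j, k)
    apply sep h2 ζ hζ hz
    intro i j k
    rcases hcov i with ⟨l, rfl⟩ | ⟨l, rfl⟩ | ⟨l, rfl⟩
    · have : MonoidAlgebra.lift F K _ (chi (ζ ^ (s l).val) (hz _) j k) =
        (Algebra.ofId F K).comp (MonoidAlgebra.lift F F _ (chi (z l) (hz8 _) j k)) := by
        ext g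
        simp [chi_apply, ← hzz, Algebra.ofId_apply]
      rw [this, AlgHom.comp_apply, hx1, map_zero]
    · exact hx2 _ _ _
    · rw [hfr, hx2, zero_pow Fintype.card_ne_zero]
  have hfin : Module.finrank F (MonoidAlgebra F (C 8 × C 2 × C 2)) =
      Module.finrank F ((Fin a × ZMod 2 × ZMod 2 → F) × (Fin b × ZMod 2 × ZMod 2 → K)) := by
    rw [(MonoidAlgebra.coeffLinearEquiv F).finrank_eq, Module.finrank_finsupp_self,
      Module.finrank_prod, Module.finrank_pi, Module.finrank_pi_fintype]
    simp [hK, ZMod.card, Fintype.card_multiplicative]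
    omega
  have : FiniteDimensional F (MonoidAlgebra F (C 8 × C 2 × C 2)) :=
    Module.Finite.of_injective Φ.toLinearMap hinj
  have hsurj := (LinearMap.injective_iff_surjective_of_finrank_eq_finrank hfin).1 hinj
  exact ⟨RingEquiv.ofBijective Φ ⟨hinj, hsurj⟩⟩

theorem unitsC {L : Type*} [Field L] [Finite L] (m : ℕ) (hm : Nat.card L - 1 = m) :
    Nonempty (Lˣ ≃* C m) := by
  have h : Nat.card Lˣ = m := by rw [Nat.card_units, hm]
  subst h
  exact ⟨(zmodCyclicMulEquiv (inferInstance : IsCyclic Lˣ)).symm⟩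

theorem unitsPi {L : Type*} [Field L] [Finite L] (m : ℕ) (hm : Nat.card L - 1 = m) (a N : ℕ)
    (hN : 4 * a = N) : Nonempty ((Fin a × ZMod 2 × ZMod 2 → L)ˣ ≃* (Fin N → C m)) := by
  obtain ⟨e⟩ := unitsC m hm
  have σ : Fin a × ZMod 2 × ZMod 2 ≃ Fin N := Fintype.equivFinOfCardEq (by simp [ZMod.card]; omega)
  exact ⟨MulEquiv.piUnits.trans ((MulEquiv.piCongrRight fun _ => e).trans
    (MulEquiv.arrowCongr σ (MulEquiv.refl _)))⟩

theorem final (F : Type*) [Field F] [Fintype F] (p n : ℕ)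
    (hp : p.Prime) (hp2 : 2 < p) [CharP F p] (hn : 0 < n)
    (hF : Fintype.card F = p ^ n) (Q : ZMod 8) (hQ : (p ^ n : ZMod 8) = Q) (hQ2 : Q ^ 2 = 1)
    (a b A B : ℕ) (hA : 4 * a = A) (hB : 4 * b = B)
    (s : Fin a → ZMod 8) (t : Fin b → ZMod 8) (hab : a + 2 * b = 8) (hs : ∀ i, Q * s i = s i)
    (hcov : ∀ i, (∃ j, s j = i) ∨ (∃ j, t j = i) ∨ (∃ j, Q * t j = i)) :
    Nonempty ((MonoidAlgebra F (C 8 × C 2 × C 2))ˣ ≃*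
      ((Fin A → C (p ^ n - 1)) × (Fin B → C (p ^ (2 * n) - 1)))) := by
  have : Fact p.Prime := ⟨hp⟩
  let K := FiniteField.Extension F p 2
  have hKc : Nat.card K = p ^ (2 * n) := by
    rw [FiniteField.natCard_extension, Nat.card_eq_fintype_card, hF, ← pow_mul, mul_comm]
  have hpo : Odd p := hp.odd_of_ne_two (by omega)
  have h2F : (2 : F) ≠ 0 := by
    intro h
    have := (CharP.cast_eq_zero_iff F p 2).1 (by exact_mod_cast h)
    exact absurd (Nat.le_of_dvd (by norm_num) this) (by omega)
  have h2 : (2 : K) ≠ 0 := by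
    intro h
    apply h2F
    apply (algebraMap F K).injective
    rw [map_ofNat, map_zero, h]
  have h8 : 8 ∣ Nat.card Kˣ := by
    rw [Nat.card_units, hKc, ← Nat.modEq_iff_dvd' (Nat.one_le_pow _ _ hp.pos),
      ← ZMod.natCast_eq_natCast_iff]
    push_cast
    rw [mul_comm, pow_mul, hQ, hQ2]
  obtain ⟨g, hg⟩ := IsCyclic.exists_ofOrder_eq_natCard (α := Kˣ)
  obtain ⟨c, hc⟩ := h8
  have hζ : IsPrimitiveRoot ((g ^ c : Kˣ) : K) 8 := by
    rw [IsPrimitiveRoot.coe_units_iff]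
    refine (IsPrimitiveRoot.orderOf g).pow (orderOf_pos g) ?_
    rw [hg, hc, mul_comm]
  have hfix : ∀ y : K, y ^ Fintype.card F = y → ∃ x : F, algebraMap F K x = y := by
    intro y hy
    rw [← Nat.card_eq_fintype_card] at hy
    refine (IsGalois.mem_range_algebraMap_iff_fixed y).2 fun f => ?_
    obtain ⟨i, -, rfl⟩ := FiniteField.Extension.exists_frob_pow_eq F p 2 f
    rw [FiniteField.Extension.frob_iterate_apply]
    induction i with
    | zero => simp
    | succ i ih => rw [pow_succ, pow_mul, ih, hy]
  obtain ⟨e⟩ := decomp h2 (FiniteField.finrank_extension F p 2) _ hζ hfix Q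
    (by rw [hF]; push_cast; exact hQ) (by rw [hF]; exact hpo.pow) a b s t hab hs hcov
  obtain ⟨e1⟩ := unitsPi (L := F) (p ^ n - 1) (by rw [Nat.card_eq_fintype_card, hF]) a A hA
  obtain ⟨e2⟩ := unitsPi (L := K) (p ^ (2 * n) - 1) (by rw [hKc]) b B hB
  exact ⟨(Units.mapEquiv e.toMulEquiv).trans (MulEquiv.prodUnits.trans (e1.prodCongr e2))⟩


theorem unit_group_stmt_7 (F : Type*) [Field F] [Fintype F] (p n : ℕ)
    (hp : p.Prime) (hp2 : 2 < p) [CharP F p] (hn : 0 < n)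
    (hF : Fintype.card F = p ^ n) :
    (((p ^ n : ZMod 8) = 1) →
      Nonempty ((MonoidAlgebra F (C 8 × C 2 × C 2))ˣ ≃* ((Fin (32) → C (p ^ n - 1))))) ∧
    (((p ^ n : ZMod 8) = -1) →
      Nonempty ((MonoidAlgebra F (C 8 × C 2 × C 2))ˣ ≃* ((Fin (8) → C (p ^ n - 1)) × (Fin (12) → C (p ^ (2 * n) - 1))))) ∧
    (((p ^ n : ZMod 8) = 3) →
      Nonempty ((MonoidAlgebra F (C 8 × C 2 × C 2))ˣ ≃* ((Fin (8) → C (p ^ n - 1)) × (Fin (12) → C (p ^ (2 * n) - 1))))) ∧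
    (((p ^ n : ZMod 8) = -3) →
      Nonempty ((MonoidAlgebra F (C 8 × C 2 × C 2))ˣ ≃* ((Fin (16) → C (p ^ n - 1)) × (Fin (8) → C (p ^ (2 * n) - 1))))) := by

  refine ⟨fun h => ?_, fun h => ?_, fun h => ?_, fun h => ?_⟩
  · obtain ⟨e⟩ := final F p n hp hp2 hn hF 1 h (by decide) 8 0 32 0 rfl rfl
      (fun i => (i.val : ZMod 8)) ![] rfl (by decide) (by decide)
    exact ⟨e.trans MulEquiv.prodUnique⟩
  · exact final F p n hp hp2 hn hF (-1) h (by decide) 2 3 8 12 rfl rfl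
      ![0, 4] ![1, 2, 3] rfl (by decide) (by decide)
  · exact final F p n hp hp2 hn hF 3 h (by decide) 2 3 8 12 rfl rfl
      ![0, 4] ![1, 2, 5] rfl (by decide) (by decide)
  · exact final F p n hp hp2 hn hF (-3) h (by decide) 4 2 16 8 rfl rfl
      ![0, 2, 4, 6] ![1, 3] rfl (by decide) (by decide)
end

section
/- Let F be a finite field of characteristic 2 with q = 2^n elements, and let G = C_4 × C_4 × C_2. Then the unit group of the group algebra FG is isomorphic to C_4^{3n} × C_2^{25n} × C_{2^n - 1}. -/
lemma aux_struct (V : Type*) [CommGroup V] [Finite V] (a b : ℕ) (h4 : ∀ v : V, v ^ 4 = 1)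
    (hc : Nat.card V = 2 ^ (2 * a + b)) (h2 : Nat.card {v : V // v ^ 2 = 1} = 2 ^ (a + b)) :
    Nonempty (V ≃* ((Fin a → C 4) × (Fin b → C 2))) := by
  classical
  obtain ⟨ι, _, m, hm, ⟨e⟩⟩ := CommGroup.equiv_prod_multiplicative_zmod_of_finite V
  have hm' : ∀ i, m i = 4 ∨ m i = 2 := by
    intro i
    have h := h4 (e.symm (Pi.mulSingle i (Multiplicative.ofAdd 1)))
    rw [← map_pow, ← Pi.mulSingle_pow] at h
    have h' : (Multiplicative.ofAdd (1 : ZMod (m i))) ^ 4 = 1 := by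
      have := e.symm.injective (h.trans (map_one e.symm).symm)
      exact Pi.mulSingle_eq_one_iff.1 this
    rw [← ofAdd_nsmul] at h'
    have h'' : ((4 : ℕ) : ZMod (m i)) = 0 := by
      have := congrArg Multiplicative.toAdd h'
      simpa using this
    rw [ZMod.natCast_eq_zero_iff] at h''
    have h1 := hm i
    have := Nat.le_of_dvd (by norm_num) h''
    clear h h'
    generalize m i = k at *
    interval_cases k <;> simp_all
  have hm2 : ∀ i, ¬ m i = 4 → m i = 2 := fun i h => (hm' i).resolve_left h
  let e1 : (∀ i, Multiplicative (ZMod (m i))) ≃*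
      ((∀ i : {i // m i = 4}, Multiplicative (ZMod (m i))) ×
       (∀ i : {i // ¬ m i = 4}, Multiplicative (ZMod (m i)))) :=
    { Equiv.piEquivPiSubtypeProd (fun i => m i = 4) (fun i => Multiplicative (ZMod (m i))) with
      map_mul' := fun _ _ => rfl }
  let e4 : (∀ i : {i // m i = 4}, Multiplicative (ZMod (m i))) ≃* ({i // m i = 4} → C 4) :=
    MulEquiv.piCongrRight fun i => (ZMod.ringEquivCongr i.2).toAddEquiv.toMultiplicative
  let e2 : (∀ i : {i // ¬ m i = 4}, Multiplicative (ZMod (m i))) ≃* ({i // ¬ m i = 4} → C 2) :=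
    MulEquiv.piCongrRight fun i => (ZMod.ringEquivCongr (hm2 _ i.2)).toAddEquiv.toMultiplicative
  let E := e.trans (e1.trans (MulEquiv.prodCongr e4 e2))
  set A := Fintype.card {i // m i = 4} with hA
  set B := Fintype.card {i // ¬ m i = 4} with hB
  have c1 : 2 ^ (2 * a + b) = 2 ^ (2 * A + B) := by
    rw [← hc, Nat.card_congr E.toEquiv, Nat.card_prod, Nat.card_fun, Nat.card_fun]
    simp only [Nat.card_eq_fintype_card, Fintype.card_multiplicative, ZMod.card]
    rw [pow_add, pow_mul]; norm_num [hA, hB]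
  have t4 : Nat.card {x : C 4 // x ^ 2 = 1} = 2 := by
    rw [Nat.card_eq_fintype_card]; decide
  have t2 : Nat.card {x : C 2 // x ^ 2 = 1} = 2 := by
    rw [Nat.card_eq_fintype_card]; decide
  have c2 : 2 ^ (a + b) = 2 ^ (A + B) := by
    let T : {v : V // v ^ 2 = 1} ≃ ({i // m i = 4} → {x : C 4 // x ^ 2 = 1}) ×
        ({i // ¬ m i = 4} → {x : C 2 // x ^ 2 = 1}) :=
      (E.toEquiv.subtypeEquiv (q := fun y => y ^ 2 = 1) (fun v => by
        change _ ↔ (E v) ^ 2 = 1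
        rw [← map_pow, MulEquiv.map_eq_one_iff])).trans
      { toFun := fun y => (fun i => ⟨y.1.1 i, congrFun (congrArg Prod.fst y.2) i⟩,
          fun i => ⟨y.1.2 i, congrFun (congrArg Prod.snd y.2) i⟩)
        invFun := fun y => ⟨(fun i => (y.1 i).1, fun i => (y.2 i).1),
          Prod.ext (funext fun i => (y.1 i).2) (funext fun i => (y.2 i).2)⟩
        left_inv := fun _ => rfl
        right_inv := fun _ => rfl }
    rw [← h2, Nat.card_congr T, Nat.card_prod, Nat.card_fun, Nat.card_fun, t4, t2, pow_add]
    simp only [Nat.card_eq_fintype_card, hA, hB]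
  have d1 := Nat.pow_right_injective (le_refl 2) c1
  have d2 := Nat.pow_right_injective (le_refl 2) c2
  have hAa : A = a := by omega
  have hBb : B = b := by omega
  refine ⟨E.trans (MulEquiv.prodCongr ?_ ?_)⟩
  · exact MulEquiv.arrowCongr (Fintype.equivFinOfCardEq hAa) (MulEquiv.refl _)
  · exact MulEquiv.arrowCongr (Fintype.equivFinOfCardEq hBb) (MulEquiv.refl _)

def auxPi : C 4 × C 4 × C 2 →* C 2 × C 2 :=
  (AddMonoidHom.toMultiplicative (ZMod.castHom (by norm_num : 2 ∣ 4) (ZMod 2)).toAddMonoidHom).prodMap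
    ((AddMonoidHom.toMultiplicative
      (ZMod.castHom (by norm_num : 2 ∣ 4) (ZMod 2)).toAddMonoidHom).comp (MonoidHom.fst _ _))

def auxI0 : C 2 →* C 4 := MonoidHom.mk'
  (fun x => Multiplicative.ofAdd (2 * (x.toAdd.val : ZMod 4))) (by decide)

def auxI : C 2 × C 2 →* C 4 × C 4 × C 2 := auxI0.prodMap (auxI0.prod 1)

lemma auxI_inj : Function.Injective auxI := by decide
lemma auxPi_surj : Function.Surjective auxPi := by decide
lemma auxI_pi : ∀ g, auxI (auxPi g) = g ^ 2 := by decide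

lemma aux_pow4 : ∀ g : C 4 × C 4 × C 2, g ^ 4 = 1 := by decide

open MonoidAlgebra in
theorem aux_sq (F : Type*) [Field F] [CharP F 2] (x : MonoidAlgebra F (C 4 × C 4 × C 2)) :
    mapDomainRingHom F auxI (mapRingHom _ (frobenius F 2) (mapDomainRingHom F auxPi x)) = x ^ 2 := by
  have : CharP (MonoidAlgebra F (C 4 × C 4 × C 2)) 2 :=
    charP_of_injective_algebraMap (algebraMap F _).injective 2
  have : (mapDomainRingHom F auxI).comp ((mapRingHom _ (frobenius F 2)).comp
      (mapDomainRingHom F auxPi)) = frobenius (MonoidAlgebra F (C 4 × C 4 × C 2)) 2 := by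
    apply MonoidAlgebra.ringHom_ext
    · intro r; simp [frobenius_def, single_pow]
    · intro g; simp [frobenius_def, single_pow, auxI_pi]
  exact RingHom.congr_fun this x

open MonoidAlgebra in
theorem aux_sq_zero (F : Type*) [Field F] [CharP F 2] (x : MonoidAlgebra F (C 4 × C 4 × C 2)) :
    x ^ 2 = 0 ↔ mapDomainRingHom F auxPi x = 0 := by
  rw [← aux_sq]
  constructor
  · intro h
    have h1 : mapRingHom _ (frobenius F 2) (mapDomainRingHom F auxPi x) = 0 := by
      apply mapDomain_injective (R := F) auxI_inj
      simpa using h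
    apply map_injective (frobenius F 2 : F →+ F) (frobenius F 2).injective
    exact h1.trans (map_zero (mapRingHom (C 2 × C 2) (frobenius F 2))).symm
  · intro h; simp [h]

noncomputable def auxEps (F : Type*) [Field F] :
    MonoidAlgebra F (C 4 × C 4 × C 2) →+* F :=
  (MonoidAlgebra.lift F F (C 4 × C 4 × C 2) 1).toRingHom

lemma auxEps_single (F : Type*) [Field F] (g) (r : F) :
    auxEps F (MonoidAlgebra.single g r) = r := by
  simp [auxEps]

lemma auxEps_algebraMap (F : Type*) [Field F] (r : F) :
    auxEps F (algebraMap F _ r) = r := by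
  simp [auxEps]

open MonoidAlgebra in
theorem aux_four (F : Type*) [Field F] [CharP F 2] (x : MonoidAlgebra F (C 4 × C 4 × C 2)) :
    x ^ 4 = algebraMap F _ (auxEps F x ^ 4) := by
  have : CharP (MonoidAlgebra F (C 4 × C 4 × C 2)) 2 :=
    charP_of_injective_algebraMap (algebraMap F _).injective 2
  have : iterateFrobenius (MonoidAlgebra F (C 4 × C 4 × C 2)) 2 2 =
      (algebraMap F _).comp ((iterateFrobenius F 2 2).comp (auxEps F)) := by
    apply MonoidAlgebra.ringHom_ext
    · intro r; simp [iterateFrobenius_def, single_pow, auxEps_single]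
    · intro g; simp [iterateFrobenius_def, single_pow, aux_pow4, auxEps_single]
  have := RingHom.congr_fun this x
  simpa [iterateFrobenius_def] using this

lemma aux_card_s8 (F : Type*) [Field F] (H : Type*) [Finite H] :
    Nat.card (MonoidAlgebra F H) = Nat.card F ^ Nat.card H := by
  rw [Nat.card_congr MonoidAlgebra.coeffEquiv, Nat.card_congr Finsupp.equivFunOnFinite,
    Nat.card_fun]

lemma aux_finite (F : Type*) [Field F] [Finite F] (H : Type*) [Finite H] :
    Finite (MonoidAlgebra F H) :=
  Finite.of_equiv _ (MonoidAlgebra.coeffEquiv.trans Finsupp.equivFunOnFinite).symm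

lemma aux_ker {A B : Type*} [Ring A] [Ring B] (f : A →+* B) (hf : Function.Surjective f) :
    Nat.card {x : A // f x = 0} * Nat.card B = Nat.card A := by
  have h := AddSubgroup.card_mul_index f.toAddMonoidHom.ker
  rw [AddSubgroup.index_ker, AddMonoidHom.range_eq_top.2 hf,
    Nat.card_congr AddSubgroup.topEquiv.toEquiv] at h
  exact h

lemma aux_split {G H : Type*} [CommGroup G] [CommGroup H] (f : G →* H) (s : H →* G)
    (h : ∀ x, f (s x) = x) : Nonempty (G ≃* f.ker × H) :=
  ⟨{ toFun := fun g => (⟨g * (s (f g))⁻¹, by simp [MonoidHom.mem_ker, h]⟩, f g)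
     invFun := fun p => p.1.1 * s p.2
     left_inv := fun g => by simp
     right_inv := fun ⟨⟨k, hk⟩, y⟩ => by
       rw [MonoidHom.mem_ker] at hk
       simp [h, hk]
     map_mul' := fun x y => by
       ext
       · simp only [map_mul, mul_inv, Subgroup.coe_mul, Prod.fst_mul]
         exact mul_mul_mul_comm _ _ _ _
       · simp }⟩

theorem unit_group_stmt_8 (F : Type*) [Field F] [Fintype F] [CharP F 2]
    (n : ℕ) (hn : 0 < n) (hF : Fintype.card F = 2 ^ n) :
    Nonempty ((MonoidAlgebra F (C 4 × C 4 × C 2))ˣ ≃*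
      ((Fin (3 * n) → C 4) × (Fin (25 * n) → C 2) × C (2 ^ n - 1))) := by
  classical
  have := aux_finite F (C 4 × C 4 × C 2)
  have hF' : Nat.card F = 2 ^ n := by rw [Nat.card_eq_fintype_card, hF]
  let f : (MonoidAlgebra F (C 4 × C 4 × C 2))ˣ →* Fˣ := Units.map (auxEps F).toMonoidHom
  let s : Fˣ →* (MonoidAlgebra F (C 4 × C 4 × C 2))ˣ := Units.map (algebraMap F _).toMonoidHom
  obtain ⟨e⟩ := aux_split f s (fun x => Units.ext (auxEps_algebraMap F x))
  have hker : ∀ u, u ∈ f.ker ↔ auxEps F (u : MonoidAlgebra F (C 4 × C 4 × C 2)) = 1 := by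
    intro u
    rw [MonoidHom.mem_ker, Units.ext_iff]; rfl
  have hone : ∀ x : MonoidAlgebra F (C 4 × C 4 × C 2), auxEps F x = 1 → x ^ 4 = 1 := by
    intro x hx
    rw [aux_four, hx, one_pow, map_one]
  have h4 : ∀ v : f.ker, v ^ 4 = 1 := by
    intro v
    ext1
    ext1
    simpa using hone _ ((hker _).1 v.2)
  -- elements of the kernel
  let T : f.ker ≃ {x : MonoidAlgebra F (C 4 × C 4 × C 2) // auxEps F x = 0} :=
    { toFun := fun v => ⟨(v.1 : MonoidAlgebra F (C 4 × C 4 × C 2)) - 1, by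
        rw [map_sub, (hker _).1 v.2, map_one, sub_self]⟩
      invFun := fun x => ⟨Units.ofPowEqOne (x.1 + 1) 4
        (hone _ (by rw [map_add, x.2, map_one, zero_add])) (by norm_num), by
          rw [hker, Units.val_ofPowEqOne, map_add, x.2, map_one, zero_add]⟩
      left_inv := fun v => by ext1; ext1; simp
      right_inv := fun x => by ext1; simp }
  have : CharP (MonoidAlgebra F (C 4 × C 4 × C 2)) 2 :=
    charP_of_injective_algebraMap (algebraMap F _).injective 2
  have hsq : ∀ v : f.ker, v ^ 2 = 1 ↔ MonoidAlgebra.mapDomainRingHom F auxPi (T v).1 = 0 := by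
    intro v
    rw [← aux_sq_zero]
    change _ ↔ ((v.1 : MonoidAlgebra F (C 4 × C 4 × C 2)) - 1) ^ 2 = 0
    rw [sub_pow_char, one_pow, sub_eq_zero, Subtype.ext_iff, Units.ext_iff]
    rfl
  have heps : ∀ x : MonoidAlgebra F (C 4 × C 4 × C 2),
      MonoidAlgebra.mapDomainRingHom F auxPi x = 0 → auxEps F x = 0 := by
    intro x hx
    have := (aux_sq_zero F x).2 hx
    have := congrArg (auxEps F) this
    rw [map_pow, map_zero] at this
    exact pow_eq_zero_iff (two_ne_zero) |>.1 this
  let T2 : {v : f.ker // v ^ 2 = 1} ≃ {x : MonoidAlgebra F (C 4 × C 4 × C 2) //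
      MonoidAlgebra.mapDomainRingHom F auxPi x = 0} :=
    (T.subtypeEquiv (q := fun y => MonoidAlgebra.mapDomainRingHom F auxPi y.1 = 0) hsq).trans
      (Equiv.subtypeSubtypeEquivSubtype (fun {x} hx => heps x hx))
  have cG : Nat.card (C 4 × C 4 × C 2) = 32 := by
    rw [Nat.card_eq_fintype_card]; rfl
  have cH : Nat.card (C 2 × C 2) = 4 := by
    rw [Nat.card_eq_fintype_card]; rfl
  have cV : Nat.card f.ker = 2 ^ (2 * (3 * n) + 25 * n) := by
    rw [Nat.card_congr T]
    have h := aux_ker (auxEps F) (fun r => ⟨_, auxEps_algebraMap F r⟩)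
    rw [aux_card_s8, cG, hF'] at h
    apply Nat.eq_of_mul_eq_mul_right (pow_pos two_pos n : 0 < 2 ^ n)
    rw [h, ← pow_mul, ← pow_add]; congr 1; ring
  have cV2 : Nat.card {v : f.ker // v ^ 2 = 1} = 2 ^ (3 * n + 25 * n) := by
    rw [Nat.card_congr T2]
    have h := aux_ker (MonoidAlgebra.mapDomainRingHom F auxPi) (by
      intro y
      induction y using MonoidAlgebra.induction_linear with
      | zero => exact ⟨0, map_zero _⟩
      | add a b ha hb =>
        obtain ⟨a', rfl⟩ := ha
        obtain ⟨b', rfl⟩ := hb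
        exact ⟨a' + b', map_add _ _ _⟩
      | single h r =>
        obtain ⟨g, rfl⟩ := auxPi_surj h
        exact ⟨MonoidAlgebra.single g r, by simp⟩)
    rw [aux_card_s8, aux_card_s8, cG, cH, hF'] at h
    apply Nat.eq_of_mul_eq_mul_right (pow_pos (pow_pos two_pos n) 4 : 0 < (2 ^ n) ^ 4)
    rw [h, ← pow_mul, ← pow_mul, ← pow_add]; congr 1; ring
  obtain ⟨e'⟩ := aux_struct f.ker (3 * n) (25 * n) h4 cV cV2
  have cU : Nat.card Fˣ = Nat.card (C (2 ^ n - 1)) := by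
    rw [Nat.card_units, hF']
    exact (Nat.card_zmod _).symm
  let eU : Fˣ ≃* C (2 ^ n - 1) := mulEquivOfCyclicCardEq cU
  exact ⟨e.trans ((MulEquiv.prodCongr e' eU).trans MulEquiv.prodAssoc)⟩
end

section
/- Let F be a finite field of characteristic p > 2 with q = p^n elements, and let G = C_4 × C_4 × C_2. Then the unit group U(FG) is isomorphic to: C_{p^n-1}^{32} if q ≡ 1 (mod 4); C_{p^n-1}^8 × C_{p^{2n}-1}^{12} if q ≡ -1 (mod 4). -/
noncomputable def chr {A : Type*} [CommRing A] (u v w : A) (hu : u ^ 4 = 1) (hv : v ^ 4 = 1)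
    (hw : w ^ 2 = 1) : C 4 × C 4 × C 2 →* A :=
  (AddChar.zmodChar 4 hu).toMonoidHom.coprod
    ((AddChar.zmodChar 4 hv).toMonoidHom.coprod (AddChar.zmodChar 2 hw).toMonoidHom)

theorem chr_apply {A : Type*} [CommRing A] (u v w : A) (hu : u ^ 4 = 1) (hv : v ^ 4 = 1)
    (hw : w ^ 2 = 1) (g : C 4 × C 4 × C 2) :
    chr u v w hu hv hw g = u ^ (ZMod.val g.1.toAdd) *
      (v ^ (ZMod.val g.2.1.toAdd) * w ^ (ZMod.val g.2.2.toAdd)) := by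
  rfl

/-- evaluation of a group algebra element at a character -/
noncomputable def ev (F : Type*) [Field F] {A : Type*} [CommRing A] [Algebra F A]
    (u v w : A) (hu : u ^ 4 = 1) (hv : v ^ 4 = 1)
    (hw : w ^ 2 = 1) : MonoidAlgebra F (C 4 × C 4 × C 2) →ₐ[F] A :=
  MonoidAlgebra.lift F A _ (chr u v w hu hv hw)

theorem ev_apply (F : Type*) [Field F] {A : Type*} [CommRing A] [Algebra F A]
    (u v w : A) (hu : u ^ 4 = 1) (hv : v ^ 4 = 1)
    (hw : w ^ 2 = 1) (x : MonoidAlgebra F (C 4 × C 4 × C 2)) :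
    ev F u v w hu hv hw x = ∑ g, algebraMap F A (x.coeff g) * chr u v w hu hv hw g := by
  rw [ev, MonoidAlgebra.lift_apply', Finsupp.sum_fintype]
  simp

theorem map_ev (F : Type*) [Field F] {A B : Type*} [CommRing A] [Algebra F A]
    [CommRing B] [Algebra F B] (φ : A →ₐ[F] B)
    (u v w : A) (hu : u ^ 4 = 1) (hv : v ^ 4 = 1)
    (hw : w ^ 2 = 1) (u' v' w' : B) (hu' : u' ^ 4 = 1) (hv' : v' ^ 4 = 1)
    (hw' : w' ^ 2 = 1) (h1 : φ u = u') (h2 : φ v = v') (h3 : φ w = w')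
    (x : MonoidAlgebra F (C 4 × C 4 × C 2)) :
    φ (ev F u v w hu hv hw x) = ev F u' v' w' hu' hv' hw' x := by
  subst h1 h2 h3
  simp [ev_apply, chr_apply]

theorem pow4_inj {K : Type*} [Field K] (h2 : (2 : K) ≠ 0) (i : K) (hi : i ^ 2 = -1)
    (a b : Fin 4) (h : i ^ (a : ℕ) = i ^ (b : ℕ)) : a = b := by
  have hord : orderOf i = 2 ^ (1 + 1) := by
    apply orderOf_eq_prime_pow
    · rw [pow_one, hi]
      intro h
      apply h2
      linear_combination -h
    · linear_combination (i ^ 2 - 1) * hi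
  apply Fin.ext
  apply pow_injOn_Iio_orderOf _ _ h
  · rw [hord]; exact a.2
  · rw [hord]; exact b.2

theorem pow2_inj {K : Type*} [Field K] (h2 : (2 : K) ≠ 0)
    (a b : Fin 2) (h : (-1 : K) ^ (a : ℕ) = (-1) ^ (b : ℕ)) : a = b := by
  have h' : (-1 : K) ≠ 1 := by
    intro h
    apply h2
    linear_combination -h
  fin_cases a <;> fin_cases b
  · rfl
  · exact absurd (by simpa using h.symm) h'
  · exact absurd (by simpa using h) h'
  · rfl

theorem sgn_pow {K : Type*} [CommRing K] (c : ℕ) : ((-1 : K) ^ c) ^ 2 = 1 := by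
  rw [← pow_mul, mul_comm, pow_mul]; simp

theorem sgn_pow4 {K : Type*} [CommRing K] (c : ℕ) : ((-1 : K) ^ c) ^ 4 = 1 := by
  rw [← pow_mul, mul_comm, pow_mul, Even.neg_one_pow (by decide)]; simp

theorem i_pow {K : Type*} [CommRing K] (i : K) (hi : i ^ 2 = -1) (c : ℕ) : (i ^ c) ^ 4 = 1 := by
  have : i ^ 4 = 1 := by linear_combination (i ^ 2 - 1) * hi
  rw [← pow_mul, mul_comm, pow_mul, this, one_pow]

theorem ev_inj (F : Type*) [Field F] {K : Type*} [Field K] [Algebra F K] (h2 : (2 : K) ≠ 0)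
    (i : K) (hi : i ^ 2 = -1) (x : MonoidAlgebra F (C 4 × C 4 × C 2))
    (h : ∀ (a b : Fin 4) (c : Fin 2), ev F (i ^ (a : ℕ)) (i ^ (b : ℕ)) ((-1) ^ (c : ℕ))
      (i_pow i hi _) (i_pow i hi _) (sgn_pow _) x = 0) : x = 0 := by
  let f : C 4 × C 4 × C 2 → (C 4 × C 4 × C 2 →* K) := fun g =>
    chr (i ^ ((show Fin 4 from g.1) : ℕ)) (i ^ ((show Fin 4 from g.2.1) : ℕ))
      ((-1) ^ ((show Fin 2 from g.2.2) : ℕ)) (i_pow i hi _) (i_pow i hi _) (sgn_pow _)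
  have hf : Function.Injective f := by
    intro g g' hg
    have e1 := DFunLike.congr_fun hg (Multiplicative.ofAdd 1, 1, 1)
    have e2 := DFunLike.congr_fun hg (1, Multiplicative.ofAdd 1, 1)
    have e3 := DFunLike.congr_fun hg (1, 1, Multiplicative.ofAdd 1)
    simp only [f, chr_apply, toAdd_ofAdd, toAdd_one, ZMod.val_zero, pow_zero, mul_one, one_mul,
      ZMod.val_one''  (show (4 : ℕ) ≠ 1 by decide), ZMod.val_one'' (show (2 : ℕ) ≠ 1 by decide),
      pow_one] at e1 e2 e3
    exact Prod.ext (pow4_inj h2 i hi _ _ e1)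
      (Prod.ext (pow4_inj h2 i hi _ _ e2) (pow2_inj h2 _ _ e3))
  have hl := (linearIndependent_monoidHom (C 4 × C 4 × C 2) K).comp f hf
  let M : Matrix (C 4 × C 4 × C 2) (C 4 × C 4 × C 2) K := Matrix.of fun g g' => f g g'
  have hM : IsUnit M := Matrix.linearIndependent_rows_iff_isUnit.mp hl
  have hinj := Matrix.mulVec_injective_iff_isUnit.mpr hM
  have h0 : M.mulVec (fun g => algebraMap F K (x.coeff g)) = M.mulVec 0 := by
    ext g
    rw [Matrix.mulVec_zero]
    have := h g.1 g.2.1 g.2.2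
    rw [ev_apply] at this
    simp only [Pi.zero_apply]
    rw [← this]
    simp only [Matrix.mulVec, dotProduct]
    refine Finset.sum_congr rfl fun g' _ => mul_comm _ _
  have h1 := hinj h0
  apply MonoidAlgebra.ext
  ext g
  have := congrFun h1 g
  simpa using this

theorem units_cyc (K : Type*) [Field K] [Finite K] (m : ℕ) (hm : Nat.card K = m) :
    Nonempty (Kˣ ≃* C (m - 1)) := by
  have hc : Nat.card Kˣ = m - 1 := by rw [Nat.card_units, hm]
  exact ⟨mulEquivOfCyclicCardEq (hc.trans (Nat.card_zmod (m - 1)).symm)⟩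

theorem finrank_FG (F : Type*) [Field F] :
    Module.finrank F (MonoidAlgebra F (C 4 × C 4 × C 2)) = 32 := by
  rw [(MonoidAlgebra.coeffLinearEquiv (M := C 4 × C 4 × C 2) (S := F) F).finrank_eq,
    Module.finrank_finsupp_self]
  simp

instance fin_FG (F : Type*) [Field F] :
    Module.Finite F (MonoidAlgebra F (C 4 × C 4 × C 2)) :=
  Module.Finite.equiv (MonoidAlgebra.coeffLinearEquiv (M := C 4 × C 4 × C 2) (S := F) F).symm

theorem case1 (F : Type*) [Field F] [Finite F] (h2 : (2 : F) ≠ 0) (i : F) (hi : i ^ 2 = -1)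
    (m : ℕ) (hm : Nat.card F = m) :
    Nonempty ((MonoidAlgebra F (C 4 × C 4 × C 2))ˣ ≃* (Fin 32 → C (m - 1))) := by
  let Φ : MonoidAlgebra F (C 4 × C 4 × C 2) →ₐ[F] (Fin 4 × Fin 4 × Fin 2 → F) :=
    AlgHom.pi fun t => ev F (i ^ (t.1 : ℕ)) (i ^ (t.2.1 : ℕ)) ((-1) ^ (t.2.2 : ℕ))
      (i_pow i hi _) (i_pow i hi _) (sgn_pow _)
  have hinj : Function.Injective Φ := by
    rw [injective_iff_map_eq_zero]
    intro x hx
    exact ev_inj F h2 i hi x fun a b c => congrFun hx (a, b, c)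
  have hsurj : Function.Surjective Φ := by
    refine (LinearMap.injective_iff_surjective_of_finrank_eq_finrank (f := Φ.toLinearMap) ?_).mp hinj
    rw [finrank_FG]; simp
  let e := (RingEquiv.ofBijective Φ ⟨hinj, hsurj⟩).toMulEquiv
  obtain ⟨k⟩ := units_cyc F m hm
  have hc : Fintype.card (Fin 4 × Fin 4 × Fin 2) = 32 := by simp
  exact ⟨(Units.mapEquiv e).trans (MulEquiv.piUnits.trans
    (MulEquiv.arrowCongr (Fintype.equivFinOfCardEq hc) k))⟩

theorem case2 (F : Type*) [Field F] [Finite F] (h2 : (2 : F) ≠ 0)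
    (K : Type*) [Field K] [Finite K] [Algebra F K] (hK : Module.finrank F K = 2)
    (i : K) (hi : i ^ 2 = -1) (φ : K →ₐ[F] K) (hφ : φ i = -i)
    (m m' : ℕ) (hm : Nat.card F = m) (hm' : Nat.card K = m') :
    Nonempty ((MonoidAlgebra F (C 4 × C 4 × C 2))ˣ ≃*
      (Fin 8 → C (m - 1)) × (Fin 12 → C (m' - 1))) := by
  have hi4 : i ^ 4 = 1 := by linear_combination (i ^ 2 - 1) * hi
  have h2K : (2 : K) ≠ 0 := by
    intro h
    apply h2
    apply (algebraMap F K).injective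
    rw [map_ofNat, map_zero, h]
  let Φ : MonoidAlgebra F (C 4 × C 4 × C 2) →ₐ[F] (Fin 2 × Fin 2 × Fin 2 → F) ×
      ((Fin 4 × Fin 2) ⊕ (Fin 2 × Fin 2) → K) :=
    AlgHom.prod
      (AlgHom.pi fun t => ev F ((-1) ^ (t.1 : ℕ)) ((-1) ^ (t.2.1 : ℕ)) ((-1) ^ (t.2.2 : ℕ))
        (sgn_pow4 _) (sgn_pow4 _) (sgn_pow _))
      (AlgHom.pi fun t => Sum.rec
        (fun t => ev F i (i ^ (t.1 : ℕ)) ((-1) ^ (t.2 : ℕ)) hi4 (i_pow i hi _) (sgn_pow _))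
        (fun t => ev F ((-1) ^ (t.1 : ℕ)) i ((-1) ^ (t.2 : ℕ)) (sgn_pow4 _) hi4 (sgn_pow _)) t)
  have hinj : Function.Injective Φ := by
    rw [injective_iff_map_eq_zero]
    intro x hx
    have hA : ∀ (a b c : Fin 2), ev F ((-1 : F) ^ (a : ℕ)) ((-1) ^ (b : ℕ)) ((-1) ^ (c : ℕ))
        (sgn_pow4 _) (sgn_pow4 _) (sgn_pow _) x = 0 := fun a b c =>
      congrFun (congrArg Prod.fst hx) (a, b, c)
    have hB : ∀ (b : Fin 4) (c : Fin 2), ev F i (i ^ (b : ℕ)) ((-1) ^ (c : ℕ))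
        hi4 (i_pow i hi _) (sgn_pow _) x = 0 := fun b c =>
      congrFun (congrArg Prod.snd hx) (Sum.inl (b, c))
    have hC : ∀ (a c : Fin 2), ev F ((-1) ^ (a : ℕ)) i ((-1) ^ (c : ℕ))
        (sgn_pow4 _) hi4 (sgn_pow _) x = 0 := fun b c =>
      congrFun (congrArg Prod.snd hx) (Sum.inr (b, c))
    have i3 : i ^ 3 = -i := by linear_combination i * hi
    have hA' : ∀ (a b c : Fin 2) (u v w : K) (hu : u ^ 4 = 1) (hv : v ^ 4 = 1) (hw : w ^ 2 = 1),
        u = (-1) ^ (a : ℕ) → v = (-1) ^ (b : ℕ) → w = (-1) ^ (c : ℕ) →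
        ev F u v w hu hv hw x = 0 := by
      intro a b c u v w hu hv hw e1 e2 e3
      rw [← map_ev F (Algebra.ofId F K) _ _ _ (sgn_pow4 a) (sgn_pow4 b) (sgn_pow c) u v w hu hv hw
        (by simp [e1]) (by simp [e2]) (by simp [e3]), hA, map_zero]
    have hB' : ∀ (b : Fin 4) (c : Fin 2) (u v w : K) (hu : u ^ 4 = 1) (hv : v ^ 4 = 1)
        (hw : w ^ 2 = 1), u = -i → v = (-i) ^ (b : ℕ) → w = (-1) ^ (c : ℕ) →
        ev F u v w hu hv hw x = 0 := by
      intro b c u v w hu hv hw e1 e2 e3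
      rw [← map_ev F φ _ _ _ hi4 (i_pow i hi b) (sgn_pow c) u v w hu hv hw
        (by simp [e1, hφ]) (by simp [e2, hφ]) (by simp [e3]), hB, map_zero]
    have hC' : ∀ (a c : Fin 2) (u v w : K) (hu : u ^ 4 = 1) (hv : v ^ 4 = 1)
        (hw : w ^ 2 = 1), u = (-1) ^ (a : ℕ) → v = -i → w = (-1) ^ (c : ℕ) →
        ev F u v w hu hv hw x = 0 := by
      intro a c u v w hu hv hw e1 e2 e3
      rw [← map_ev F φ _ _ _ (sgn_pow4 a) hi4 (sgn_pow c) u v w hu hv hw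
        (by simp [e1]) (by simp [e2, hφ]) (by simp [e3]), hC, map_zero]
    have hB0 : ∀ (b : Fin 4) (c : Fin 2) (u v w : K) (hu : u ^ 4 = 1) (hv : v ^ 4 = 1)
        (hw : w ^ 2 = 1), u = i → v = i ^ (b : ℕ) → w = (-1) ^ (c : ℕ) →
        ev F u v w hu hv hw x = 0 := by
      intro b c u v w hu hv hw e1 e2 e3
      subst e1 e2 e3
      exact hB b c
    have hC0 : ∀ (a c : Fin 2) (u v w : K) (hu : u ^ 4 = 1) (hv : v ^ 4 = 1)
        (hw : w ^ 2 = 1), u = (-1) ^ (a : ℕ) → v = i → w = (-1) ^ (c : ℕ) →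
        ev F u v w hu hv hw x = 0 := by
      intro a c u v w hu hv hw e1 e2 e3
      subst e1 e2 e3
      exact hC a c
    -- even exponents in the first two slots
    have hE : ∀ a : Fin 4, (∃ s : Fin 2, i ^ (a : ℕ) = (-1) ^ (s : ℕ)) ∨ i ^ (a : ℕ) = i ∨
        i ^ (a : ℕ) = -i := by
      intro a
      fin_cases a
      · exact Or.inl ⟨0, by simp⟩
      · exact Or.inr (Or.inl (by simp))
      · exact Or.inl ⟨1, by simp [hi]⟩
      · exact Or.inr (Or.inr i3)
    have hN : ∀ b : Fin 4, ∃ b' : Fin 4, i ^ (b : ℕ) = (-i) ^ (b' : ℕ) := by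
      intro b
      fin_cases b
      · exact ⟨0, by simp⟩
      · refine ⟨3, ?_⟩
        change i ^ 1 = (-i) ^ 3
        linear_combination i * hi
      · refine ⟨2, ?_⟩
        change i ^ 2 = (-i) ^ 2
        ring
      · refine ⟨1, ?_⟩
        change i ^ 3 = (-i) ^ 1
        linear_combination i * hi
    refine ev_inj F h2K i hi x fun a b c => ?_
    rcases hE a with ⟨s, hs⟩ | ha | ha
    · rcases hE b with ⟨t, ht⟩ | hb | hb
      · exact hA' s t c _ _ _ _ _ _ hs ht rfl
      · exact hC0 s c _ _ _ _ _ _ hs hb rfl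
      · exact hC' s c _ _ _ _ _ _ hs hb rfl
    · exact hB0 b c _ _ _ _ _ _ ha rfl rfl
    · obtain ⟨b', hb'⟩ := hN b
      exact hB' b' c _ _ _ _ _ _ ha hb' rfl
  have hfin : Module.Finite F K := Module.Finite.of_finite
  have hsurj : Function.Surjective Φ := by
    refine (LinearMap.injective_iff_surjective_of_finrank_eq_finrank (f := Φ.toLinearMap) ?_).mp hinj
    rw [finrank_FG, Module.finrank_prod, Module.finrank_pi_fintype, Module.finrank_pi_fintype]
    simp [hK]
  let e := (RingEquiv.ofBijective Φ ⟨hinj, hsurj⟩).toMulEquiv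
  obtain ⟨k⟩ := units_cyc F m hm
  obtain ⟨k'⟩ := units_cyc K m' hm'
  have hc : Fintype.card (Fin 2 × Fin 2 × Fin 2) = 8 := by simp
  have hc' : Fintype.card ((Fin 4 × Fin 2) ⊕ (Fin 2 × Fin 2)) = 12 := by simp
  exact ⟨(Units.mapEquiv e).trans (MulEquiv.prodUnits.trans (MulEquiv.prodCongr
    (MulEquiv.piUnits.trans (MulEquiv.arrowCongr (Fintype.equivFinOfCardEq hc) k))
    (MulEquiv.piUnits.trans (MulEquiv.arrowCongr (Fintype.equivFinOfCardEq hc') k'))))⟩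

theorem unit_group_stmt_9 (F : Type*) [Field F] [Fintype F] (p n : ℕ)
    (hp : p.Prime) (hp2 : 2 < p) [CharP F p] (hn : 0 < n)
    (hF : Fintype.card F = p ^ n) :
    (((p ^ n : ZMod 4) = 1) →
      Nonempty ((MonoidAlgebra F (C 4 × C 4 × C 2))ˣ ≃* ((Fin (32) → C (p ^ n - 1))))) ∧
    (((p ^ n : ZMod 4) = -1) →
      Nonempty ((MonoidAlgebra F (C 4 × C 4 × C 2))ˣ ≃* ((Fin (8) → C (p ^ n - 1)) × (Fin (12) → C (p ^ (2 * n) - 1))))) := by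
  have hcard : Nat.card F = p ^ n := by rw [Nat.card_eq_fintype_card, hF]
  have h2 : (2 : F) ≠ 0 := by
    apply Ring.two_ne_zero
    rw [ringChar.eq F p]
    omega
  constructor
  · intro h
    have h1 : p ^ n % 4 = 1 := by
      have : ((p ^ n : ℕ) : ZMod 4) = ((1 : ℕ) : ZMod 4) := by push_cast; exact h
      exact (ZMod.natCast_eq_natCast_iff _ _ _).mp this
    obtain ⟨i, hi⟩ : IsSquare (-1 : F) := by
      rw [FiniteField.isSquare_neg_one_iff, hF]
      omega
    exact case1 F h2 i (by rw [sq, hi]) _ hcard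
  · intro h
    have h1 : p ^ n % 4 = 3 := by
      have : ((p ^ n : ℕ) : ZMod 4) = ((3 : ℕ) : ZMod 4) := by push_cast; rw [h]; decide
      exact (ZMod.natCast_eq_natCast_iff _ _ _).mp this
    haveI : Fact p.Prime := ⟨hp⟩
    let K := FiniteField.Extension F p 2
    have hKc : Nat.card K = p ^ (2 * n) := by
      rw [FiniteField.natCard_extension, hcard, ← pow_mul, mul_comm]
    letI : Fintype K := Fintype.ofFinite K
    obtain ⟨i, hi⟩ : IsSquare (-1 : K) := by
      rw [FiniteField.isSquare_neg_one_iff, ← Nat.card_eq_fintype_card, hKc, mul_comm, pow_mul,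
        Nat.pow_mod, h1]
      decide
    have hi2 : i ^ 2 = -1 := by rw [sq, hi]
    refine case2 F h2 K (FiniteField.finrank_extension F p 2) i hi2
      (FiniteField.frobeniusAlgHom F K) ?_ _ _ hcard hKc
    rw [FiniteField.frobeniusAlgHom_apply, hF, ← Nat.div_add_mod (p ^ n) 4, h1, pow_add, pow_mul]
    have hi4 : i ^ 4 = 1 := by linear_combination (i ^ 2 - 1) * hi2
    rw [hi4, one_pow, one_mul]
    linear_combination i * hi2
end

section
/- Let F be a finite field of characteristic 2 with q = 2^n elements, and let G = C_4 × C_2 × C_2 × C_2. Then the unit group of the group algebra FG is isomorphic to C_4^n × C_2^{29n} × C_{2^n - 1}. -/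
lemma ug_struct4 (V : Type*) [CommGroup V] [Finite V] (h4 : ∀ v : V, v ^ 4 = 1) (a b : ℕ)
    (hV : Nat.card V = 2 ^ (a + 2 * b)) (h2 : Nat.card {v : V // v ^ 2 = 1} = 2 ^ (a + b)) :
    Nonempty (V ≃* (Fin b → C 4) × (Fin a → C 2)) := by
  classical
  obtain ⟨ι, _, n, hn, ⟨e⟩⟩ := CommGroup.equiv_prod_multiplicative_zmod_of_finite V
  have hd : ∀ i, n i = 4 ∨ n i = 2 := by
    intro i
    have h := h4 (e.symm (Pi.mulSingle i (Multiplicative.ofAdd 1)))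
    rw [← map_pow, MulEquiv.map_eq_one_iff] at h
    have h' := congrFun h i
    simp only [Pi.pow_apply, Pi.mulSingle_eq_same, Pi.one_apply, ← ofAdd_nsmul,
      ofAdd_eq_one] at h'
    have h'' : ((4 : ℕ) : ZMod (n i)) = 0 := by simpa using h'
    rw [ZMod.natCast_eq_zero_iff] at h''
    have := hn i
    have hle := Nat.le_of_dvd (by norm_num) h''
    clear h h'
    generalize n i = m at *
    interval_cases m <;> simp_all
  let e1 : ((i : ι) → Multiplicative (ZMod (n i))) ≃*
      ((i : {i // n i = 4}) → Multiplicative (ZMod (n i))) ×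
      ((i : {i // ¬ n i = 4}) → Multiplicative (ZMod (n i))) :=
    { Equiv.piEquivPiSubtypeProd (fun i => n i = 4) _ with map_mul' := fun _ _ => rfl }
  let c (m k : ℕ) (h : m = k) : Multiplicative (ZMod m) ≃* C k :=
    h ▸ MulEquiv.refl _
  let e2 : ((i : {i // n i = 4}) → Multiplicative (ZMod (n i))) ≃* ({i // n i = 4} → C 4) :=
    MulEquiv.piCongrRight fun i => c _ _ i.2
  let e3 : ((i : {i // ¬ n i = 4}) → Multiplicative (ZMod (n i))) ≃* ({i // ¬ n i = 4} → C 2) :=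
    MulEquiv.piCongrRight fun i => c _ _ ((hd i).resolve_left i.2)
  let E0 : V ≃* ({i // n i = 4} → C 4) × ({i // ¬ n i = 4} → C 2) :=
    (e.trans e1).trans (MulEquiv.prodCongr e2 e3)
  have c1 : Nat.card V = 4 ^ (Fintype.card {i // n i = 4}) *
      2 ^ (Fintype.card {i // ¬ n i = 4}) := by
    rw [Nat.card_congr E0.toEquiv]
    simp
  let T : {v : V // v ^ 2 = 1} ≃ ({i // n i = 4} → {x : C 4 // x ^ 2 = 1}) ×
      ({i // ¬ n i = 4} → C 2) :=
    (E0.toEquiv.subtypeEquiv (q := fun w => w ^ 2 = 1) (fun v => by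
      change _ ↔ (E0 v) ^ 2 = 1
      rw [← map_pow, MulEquiv.map_eq_one_iff])).trans
    { toFun := fun w => (fun i => ⟨w.1.1 i, congrFun (congrArg Prod.fst w.2) i⟩, w.1.2)
      invFun := fun w => ⟨(fun i => (w.1 i).1, w.2), by
        refine Prod.ext (funext fun i => (w.1 i).2) (funext fun i => ?_)
        have : ∀ x : C 2, x ^ 2 = 1 := by decide
        exact this _⟩
      left_inv := fun _ => rfl
      right_inv := fun _ => rfl }
  have c2 : Nat.card {v : V // v ^ 2 = 1} = 2 ^ (Fintype.card {i // n i = 4}) *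
      2 ^ (Fintype.card {i // ¬ n i = 4}) := by
    have : Fintype.card {x : C 4 // x ^ 2 = 1} = 2 := by decide
    rw [Nat.card_congr T, Nat.card_prod, Nat.card_fun, Nat.card_fun]
    simp [this]
  have h44 : ∀ k : ℕ, 4 ^ k = 2 ^ (2 * k) := fun k => by rw [pow_mul]; norm_num
  rw [hV, h44, ← pow_add] at c1
  rw [h2, ← pow_add] at c2
  have d1 := Nat.pow_right_injective le_rfl c1
  have d2 := Nat.pow_right_injective le_rfl c2
  have hb : Fintype.card {i // n i = 4} = b := by omega
  have ha : Fintype.card {i // ¬ n i = 4} = a := by omega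
  have f1 := Fintype.equivFinOfCardEq hb
  have f2 := Fintype.equivFinOfCardEq ha
  exact ⟨E0.trans (MulEquiv.prodCongr (MulEquiv.arrowCongr f1 (MulEquiv.refl _))
    (MulEquiv.arrowCongr f2 (MulEquiv.refl _)))⟩

abbrev UG := C 4 × C 2 × C 2 × C 2

/-- the element `t^2` -/
def ug_t2 : UG := (Multiplicative.ofAdd 2, 1, 1, 1)

def ug_t : UG := (Multiplicative.ofAdd 1, 1, 1, 1)

def ug_isOdd (g : UG) : Bool := decide (g.1 = Multiplicative.ofAdd 1 ∨ g.1 = Multiplicative.ofAdd 3)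

lemma ug_sq_odd (g : UG) : g ^ 2 = if ug_isOdd g then ug_t2 else 1 := by
  revert g; decide

section
variable (F : Type*) [Field F]

noncomputable def ug_odd : MonoidAlgebra F UG →ₗ[F] F :=
  (MonoidAlgebra.basis UG F).constr F (fun g => if ug_isOdd g then (1 : F) else 0)

noncomputable def ug_aug : MonoidAlgebra F UG →ₐ[F] F :=
  MonoidAlgebra.lift F F UG 1

lemma ug_odd_single (g : UG) (r : F) :
    ug_odd F (MonoidAlgebra.single g r) = if ug_isOdd g then r else 0 := by
  have : MonoidAlgebra.single g r = r • MonoidAlgebra.basis UG F g := by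
    simp
  rw [this, map_smul, ug_odd, Module.Basis.constr_basis]
  simp

lemma ug_aug_single (g : UG) (r : F) : ug_aug F (MonoidAlgebra.single g r) = r := by
  simp [ug_aug]

variable [CharP F 2]

instance : CharP (MonoidAlgebra F UG) 2 :=
  charP_of_injective_algebraMap (algebraMap F (MonoidAlgebra F UG)).injective 2

lemma ug_sq (x : MonoidAlgebra F UG) :
    x ^ 2 = MonoidAlgebra.single 1 ((ug_aug F x + ug_odd F x) ^ 2) +
      MonoidAlgebra.single ug_t2 ((ug_odd F x) ^ 2) := by
  induction x using MonoidAlgebra.induction_linear with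
  | zero => simp
  | add x y hx hy =>
    rw [CharTwo.add_sq, hx, hy]
    simp only [map_add, CharTwo.add_sq, MonoidAlgebra.single_add]
    abel
  | single g r =>
    rw [MonoidAlgebra.single_pow, ug_sq_odd, ug_aug_single, ug_odd_single]
    split_ifs <;> simp [CharTwo.add_self_eq_zero]

lemma ug_sq_eq_one (x : MonoidAlgebra F UG) (h : ug_aug F x = 1) :
    x ^ 2 = 1 ↔ ug_odd F x = 0 := by
  rw [ug_sq, h]
  constructor
  · intro hx
    have := congrArg (fun y => y.coeff ug_t2) hx
    have hne : (1 : UG) ≠ ug_t2 := by decide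
    simpa [MonoidAlgebra.one_def, hne, Finsupp.single_apply] using this
  · intro hx
    simp [hx, MonoidAlgebra.one_def]

lemma ug_pow4 (x : MonoidAlgebra F UG) (h : ug_aug F x = 1) : x ^ 4 = 1 := by
  rw [show x ^ 4 = (x ^ 2) ^ 2 by ring, ug_sq_eq_one]
  · rw [ug_sq, map_add, ug_odd_single, ug_odd_single]
    have h1 : ug_isOdd 1 = false := by decide
    have h2 : ug_isOdd ug_t2 = false := by decide
    simp [h1, h2]
  · simp [h]

end

lemma ug_fiber {F A B : Type*} [Ring F] [AddCommGroup A] [AddCommGroup B] [Module F A]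
    [Module F B] [Finite A] (f : A →ₗ[F] B) (hf : Function.Surjective f) (b : B) :
    Nat.card A = Nat.card B * Nat.card {x : A // f x = b} := by
  obtain ⟨a, rfl⟩ := hf b
  have e : {x : A // f x = f a} ≃ f.toAddMonoidHom.ker :=
    { toFun := fun x => ⟨x.1 - a, by
        rw [AddMonoidHom.mem_ker]
        change f (x.1 - a) = 0
        rw [map_sub, x.2, sub_self]⟩
      invFun := fun x => ⟨x.1 + a, by
        have := x.2
        rw [AddMonoidHom.mem_ker] at this
        change f x.1 = 0 at this
        rw [map_add, this, zero_add]⟩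
      left_inv := fun x => by simp
      right_inv := fun x => by simp }
  rw [Nat.card_congr e, AddSubgroup.card_eq_card_quotient_mul_card_addSubgroup f.toAddMonoidHom.ker]
  congr 1
  exact Nat.card_congr (QuotientAddGroup.quotientKerEquivOfSurjective f.toAddMonoidHom hf).toEquiv

theorem unit_group_stmt_10 (F : Type*) [Field F] [Fintype F] [CharP F 2]
    (n : ℕ) (hn : 0 < n) (hF : Fintype.card F = 2 ^ n) :
    Nonempty ((MonoidAlgebra F (C 4 × C 2 × C 2 × C 2))ˣ ≃*
      ((Fin (n) → C 4) × (Fin (29 * n) → C 2) × C (2 ^ n - 1))) := by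
  classical
  let R := MonoidAlgebra F UG
  have hcard : Nat.card R = 2 ^ (32 * n) := by
    rw [Nat.card_congr (MonoidAlgebra.coeffEquiv.trans Finsupp.equivFunOnFinite), Nat.card_fun,
      Nat.card_eq_fintype_card, Nat.card_eq_fintype_card, hF, ← pow_mul, mul_comm n]
    rfl
  have : Finite R := Nat.finite_of_card_ne_zero (by rw [hcard]; positivity)
  have hFc : Nat.card F = 2 ^ n := by rw [Nat.card_eq_fintype_card, hF]
  let φ : Rˣ →* Fˣ := Units.map (ug_aug F : R →* F)
  let s : Fˣ →* Rˣ := Units.map (algebraMap F R : F →* R)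
  have hs : ∀ a, φ (s a) = a := fun a => Units.ext ((ug_aug F).commutes a)
  let V := φ.ker
  let e1 : Rˣ ≃* V × Fˣ :=
    { toFun := fun u => (⟨u * (s (φ u))⁻¹, by
        rw [MonoidHom.mem_ker, map_mul, map_inv, hs, mul_inv_cancel]⟩, φ u)
      invFun := fun p => p.1.1 * s p.2
      left_inv := fun u => by simp
      right_inv := fun p => by
        have h : φ p.1.1 = 1 := p.1.2
        refine Prod.ext (Subtype.ext ?_) ?_
        · simp [hs, h]
        · simp [hs, h]
      map_mul' := fun u v => by
        refine Prod.ext (Subtype.ext ?_) ?_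
        · simp only [map_mul, mul_inv, Prod.mk_mul_mk, MulMemClass.mk_mul_mk]
          exact mul_mul_mul_comm _ _ _ _
        · simp }
  have hV1 : ∀ v : V, ug_aug F (v.1 : R) = 1 := fun v => congrArg Units.val v.2
  let mk (x : R) (h : ug_aug F x = 1) : V := ⟨⟨x, x ^ 3, by
      rw [← pow_succ', ug_pow4 F x h], by rw [← pow_succ, ug_pow4 F x h]⟩, Units.ext h⟩
  have h4 : ∀ v : V, v ^ 4 = 1 := fun v => Subtype.ext (Units.ext (ug_pow4 F _ (hV1 v)))
  have h2 : ∀ v : V, v ^ 2 = 1 ↔ ug_odd F (v.1 : R) = 0 := fun v => by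
    rw [← ug_sq_eq_one F _ (hV1 v)]
    exact ⟨fun h => congrArg (fun w : V => (w.1 : R)) h, fun h => Subtype.ext (Units.ext h)⟩
  let eV : V ≃ {x : R // ug_aug F x = 1} :=
    { toFun := fun v => ⟨v.1, hV1 v⟩
      invFun := fun x => mk x.1 x.2
      left_inv := fun v => Subtype.ext (Units.ext rfl)
      right_inv := fun x => rfl }
  let L : R →ₗ[F] F × F := (ug_aug F).toLinearMap.prod (ug_odd F)
  let eV2 : {v : V // v ^ 2 = 1} ≃ {x : R // L x = (1, 0)} :=
    { toFun := fun v => ⟨v.1.1, Prod.ext (hV1 v.1) ((h2 v.1).1 v.2)⟩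
      invFun := fun x => ⟨mk x.1 (congrArg Prod.fst x.2), (h2 _).2 (congrArg Prod.snd x.2)⟩
      left_inv := fun v => Subtype.ext (Subtype.ext (Units.ext rfl))
      right_inv := fun x => rfl }
  have hL : Function.Surjective L := by
    rintro ⟨a, b⟩
    refine ⟨MonoidAlgebra.single 1 (a - b) + MonoidAlgebra.single ug_t b, ?_⟩
    have h1 : ug_isOdd 1 = false := by decide
    have h2 : ug_isOdd ug_t = true := by decide
    change (ug_aug F _, ug_odd F _) = _
    rw [map_add, map_add, ug_aug_single, ug_aug_single, ug_odd_single, ug_odd_single]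
    simp [h1, h2]
  have k1 : Nat.card V = 2 ^ (29 * n + 2 * n) := by
    have := ug_fiber (ug_aug F).toLinearMap
      (fun a => ⟨MonoidAlgebra.single 1 a, ug_aug_single F 1 a⟩) (1 : F)
    rw [Nat.card_congr eV]
    rw [show Nat.card (MonoidAlgebra F UG) = _ from hcard, hFc,
      show 32 * n = n + (29 * n + 2 * n) by ring, pow_add] at this
    exact (Nat.eq_of_mul_eq_mul_left (by positivity) this).symm
  have k2 : Nat.card {v : V // v ^ 2 = 1} = 2 ^ (29 * n + n) := by
    have := ug_fiber L hL (1, 0)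
    rw [Nat.card_congr eV2]
    rw [hcard, Nat.card_prod, hFc, ← pow_add,
      show 32 * n = (n + n) + (29 * n + n) by ring, pow_add] at this
    exact (Nat.eq_of_mul_eq_mul_left (by positivity) this).symm
  obtain ⟨e2⟩ := ug_struct4 V h4 (29 * n) n k1 k2
  have e3 : Fˣ ≃* C (2 ^ n - 1) := by
    refine mulEquivOfCyclicCardEq ?_
    rw [Nat.card_eq_fintype_card, Fintype.card_units, hF]
    exact (Nat.card_zmod _).symm
  exact ⟨(e1.trans (MulEquiv.prodCongr e2 e3)).trans MulEquiv.prodAssoc⟩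
end
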